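/- arXiv:1307.0676 — 2 statements merged into one kernel-verified Lean document; each statement's English description precedes it below -/
import Mathlib

section
/- For 1 ≤ s < t ≤ n, the Λ-module (s,t) is projective if and only if t = s + 1 or (s,t) = (1,n). Consequently, the indecomposable projective Cohen–Macaulay Λ-modules are, up to isomorphism, exactly the n modules (1,2), (2,3), …, (n−1,n), (1,n), corresponding to the n sides of the polygon. -/
set_option synthInstance.maxHeartbeats 1000000
set_option maxHeartbeats 1000000

open Polynomial Matrix

noncomputable section

/-- The exponent `c_{ij}` (with 0-based indices `i j : Fin n`, corresponding to the 1-based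
`c_{i+1,j+1} = δ_{i+1>j+1} + δ_{i+1>j+2} − δ_{(i+1,j+1)=(1,n)}`). -/
def cExp (n : ℕ) (i j : Fin n) : ℤ :=
  (if (j : ℕ) < (i : ℕ) then 1 else 0) + (if (j : ℕ) + 1 < (i : ℕ) then 1 else 0)
    - (if (i : ℕ) = 0 ∧ (j : ℕ) = n - 1 then 1 else 0)

/-- The subset `x^c · K[x]` of `K(x)`. -/
def xPow (K : Type*) [Field K] (c : ℤ) : Set (RatFunc K) :=
  {f | ∃ p : Polynomial K, f = RatFunc.X ^ c * algebraMap (Polynomial K) (RatFunc K) p}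

/-- The carrier set of the tiled order `Λ ⊆ M_n(K(x))`:
matrices whose `(i,j)` entry lies in `x^{c_{ij}}·K[x]`. -/
def lambdaCarrier (K : Type*) [Field K] (n : ℕ) : Set (Matrix (Fin n) (Fin n) (RatFunc K)) :=
  {M | ∀ i j, M i j ∈ xPow K (cExp n i j)}

/-- Exponent pattern of the module `(i,j)` (1-based `i j`; `k : ℕ` is a 0-based coordinate,
so the 1-based coordinate is `k+1`): `0` for `k+1 ≤ i`, `1` for `i < k+1 ≤ j`, `2` otherwise. -/
def dExp (i j k : ℕ) : ℤ := if k + 1 ≤ i then 0 else if k + 1 ≤ j then 1 else 2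

/-- The carrier set of the `Λ`-module `(i,j)` inside the column space `K(x)^n`. -/
def ijSet (K : Type*) [Field K] (n : ℕ) (i j : ℕ) : Set (Fin n → RatFunc K) :=
  {v | ∀ k : Fin n, v k ∈ xPow K (dExp i j (k : ℕ))}

/-- Column vectors form a module over the matrix ring via `mulVec`. -/
instance matVecModule (K : Type*) [Field K] (n : ℕ) :
    Module (Matrix (Fin n) (Fin n) (RatFunc K)) (Fin n → RatFunc K) where
  smul M v := M.mulVec v
  one_smul v := Matrix.one_mulVec v
  mul_smul M N v := (Matrix.mulVec_mulVec v M N).symm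
  smul_zero M := Matrix.mulVec_zero M
  smul_add M u v := Matrix.mulVec_add M u v
  add_smul M N v := Matrix.add_mulVec M N v
  zero_smul v := Matrix.zero_mulVec v

universe u


section xPow

variable {K : Type*} [Field K]

lemma zero_mem_xPow (c : ℤ) : (0 : RatFunc K) ∈ xPow K c := ⟨0, by simp⟩

lemma add_mem_xPow {c : ℤ} {f g : RatFunc K} (hf : f ∈ xPow K c) (hg : g ∈ xPow K c) :
    f + g ∈ xPow K c := by
  obtain ⟨p, rfl⟩ := hf
  obtain ⟨q, rfl⟩ := hg
  exact ⟨p + q, by rw [map_add]; ring⟩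

lemma mul_mem_xPow {c d : ℤ} {f g : RatFunc K} (hf : f ∈ xPow K c) (hg : g ∈ xPow K d) :
    f * g ∈ xPow K (c + d) := by
  obtain ⟨p, rfl⟩ := hf
  obtain ⟨q, rfl⟩ := hg
  exact ⟨p * q, by rw [map_mul, zpow_add₀ RatFunc.X_ne_zero]; ring⟩

lemma zpow_mem_xPow (c : ℤ) : (RatFunc.X : RatFunc K) ^ c ∈ xPow K c := ⟨1, by simp⟩

lemma xPow_anti {c d : ℤ} (h : c ≤ d) : xPow K d ⊆ xPow K c := by
  rintro f ⟨p, rfl⟩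
  obtain ⟨k, rfl⟩ := Int.le.dest h
  exact ⟨X ^ k * p, by
    rw [zpow_add₀ RatFunc.X_ne_zero, map_mul, map_pow, RatFunc.algebraMap_X, zpow_natCast]; ring⟩

lemma mem_xPow_zero {f : RatFunc K} :
    f ∈ xPow K 0 ↔ ∃ p : K[X], f = algebraMap K[X] (RatFunc K) p := by
  simp [xPow]

lemma algebraMap_mem_xPow_one {p : K[X]} :
    algebraMap K[X] (RatFunc K) p ∈ xPow K 1 ↔ X ∣ p := by
  constructor
  · rintro ⟨q, hq⟩
    refine ⟨q, RatFunc.algebraMap_injective K ?_⟩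
    rw [hq, map_mul, RatFunc.algebraMap_X, zpow_one]
  · rintro ⟨q, rfl⟩
    exact ⟨q, by rw [map_mul, RatFunc.algebraMap_X, zpow_one]⟩

lemma zpow_mul_mem_xPow_iff {c d : ℤ} {f : RatFunc K} :
    RatFunc.X ^ d * f ∈ xPow K c ↔ f ∈ xPow K (c - d) := by
  constructor
  · intro h
    have := mul_mem_xPow (zpow_mem_xPow (K := K) (-d)) h
    rwa [← mul_assoc, ← zpow_add₀ RatFunc.X_ne_zero, neg_add_cancel, zpow_zero, one_mul,
      neg_add_eq_sub] at this
  · intro h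
    have := mul_mem_xPow (zpow_mem_xPow (K := K) d) h
    rwa [add_sub_cancel] at this

/-- A rational function lying in arbitrarily high powers of `x` vanishes. -/
lemma eq_zero_of_forall_mem_xPow {f : RatFunc K} (h : ∀ N : ℕ, f ∈ xPow K N) : f = 0 := by
  by_contra hf
  have hnum : f.num ≠ 0 := RatFunc.num_ne_zero hf
  obtain ⟨p, hp⟩ := h (f.num.natDegree + 1)
  have hd : algebraMap K[X] (RatFunc K) f.denom ≠ 0 :=
    RatFunc.algebraMap_ne_zero f.denom_ne_zero
  have key : f.num = X ^ (f.num.natDegree + 1) * (p * f.denom) := by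
    apply RatFunc.algebraMap_injective K
    have h1 := RatFunc.num_div_denom f
    rw [div_eq_iff hd] at h1
    rw [h1, map_mul, map_mul, map_pow, RatFunc.algebraMap_X, ← mul_assoc, ← zpow_natCast, ← hp]
  have := Polynomial.natDegree_le_of_dvd ⟨_, key⟩ hnum
  rw [Polynomial.natDegree_X_pow] at this
  omega

end xPow

section Order

variable {K : Type*} [Field K] {n : ℕ}
  {Λ : Subalgebra K[X] (Matrix (Fin n) (Fin n) (RatFunc K))}

lemma coe_smul_apply (a : Λ) (v : Fin n → RatFunc K) (k : Fin n) :
    (a • v) k = ∑ l, a.1 k l * v l := rfl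

lemma coe_add_apply (a b : Λ) (k l : Fin n) : (a + b).1 k l = a.1 k l + b.1 k l := rfl

lemma coe_mul_apply (a b : Λ) (k l : Fin n) :
    (a * b).1 k l = ∑ k', a.1 k k' * b.1 k' l := rfl

lemma cExp_self (hn : 2 ≤ n) (i : Fin n) : cExp n i i = 0 := by
  unfold cExp; split_ifs <;> omega

lemma cExp_add_nonneg (hn : 2 ≤ n) (i j : Fin n) : 0 ≤ cExp n i j + cExp n j i := by
  unfold cExp; split_ifs <;> omega

/-- The matrix with `i`-th column `v` and zeros elsewhere. -/
def colMatrix (i : Fin n) (v : Fin n → RatFunc K) : Matrix (Fin n) (Fin n) (RatFunc K) :=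
  fun k l => if l = i then v k else 0

lemma colMatrix_apply (i : Fin n) (v : Fin n → RatFunc K) (k l : Fin n) :
    colMatrix i v k l = if l = i then v k else 0 := rfl

lemma sum_colMatrix_mul (i : Fin n) (v w : Fin n → RatFunc K) (k : Fin n) :
    ∑ l, colMatrix i v k l * w l = v k * w i := by
  simp [colMatrix_apply]

lemma colMatrix_mem (hΛ : (Λ : Set (Matrix (Fin n) (Fin n) (RatFunc K))) = lambdaCarrier K n)
    {i : Fin n} {v : Fin n → RatFunc K} (hv : ∀ k, v k ∈ xPow K (cExp n k i)) :
    colMatrix i v ∈ Λ := by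
  rw [← SetLike.mem_coe, hΛ]
  intro k l
  unfold colMatrix
  split_ifs with h
  · exact h ▸ hv k
  · exact zero_mem_xPow _

/-- The element of `Λ` with `i`-th column `v` and zeros elsewhere. -/
def colElt (hΛ : (Λ : Set (Matrix (Fin n) (Fin n) (RatFunc K))) = lambdaCarrier K n)
    (i : Fin n) (v : Fin n → RatFunc K) (hv : ∀ k, v k ∈ xPow K (cExp n k i)) : Λ :=
  ⟨colMatrix i v, colMatrix_mem hΛ hv⟩

lemma coe_colElt_apply
    (hΛ : (Λ : Set (Matrix (Fin n) (Fin n) (RatFunc K))) = lambdaCarrier K n)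
    (i : Fin n) (v : Fin n → RatFunc K) (hv) (k l : Fin n) :
    (colElt hΛ i v hv).1 k l = if l = i then v k else 0 := rfl

lemma colElt_smul_apply
    (hΛ : (Λ : Set (Matrix (Fin n) (Fin n) (RatFunc K))) = lambdaCarrier K n)
    (i : Fin n) (v : Fin n → RatFunc K) (hv) (w : Fin n → RatFunc K) (k : Fin n) :
    (colElt hΛ i v hv • w) k = v k * w i :=
  (coe_smul_apply _ _ _).trans (sum_colMatrix_mul i v w k)

lemma colElt_mul_apply
    (hΛ : (Λ : Set (Matrix (Fin n) (Fin n) (RatFunc K))) = lambdaCarrier K n)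
    (i : Fin n) (v : Fin n → RatFunc K) (hv) (b : Λ) (k l : Fin n) :
    (colElt hΛ i v hv * b).1 k l = v k * b.1 i l :=
  (coe_mul_apply _ _ _ _).trans (sum_colMatrix_mul i v (fun k => b.1 k l) k)

lemma entry_mem (hΛ : (Λ : Set (Matrix (Fin n) (Fin n) (RatFunc K))) = lambdaCarrier K n)
    (a : Λ) (i j : Fin n) : a.1 i j ∈ xPow K (cExp n i j) := by
  have : a.1 ∈ (Λ : Set _) := a.2
  rw [hΛ] at this
  exact this i j

/-- A nonzero projective `Λ`-module admits a functional to `Λ` one of whose values has a diagonal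
entry with nonzero constant term: otherwise the dual basis property would force every value of
every functional into all powers of the radical of `Λ` at `x`. -/
lemma exists_functional (hn : 3 ≤ n)
    (hΛ : (Λ : Set (Matrix (Fin n) (Fin n) (RatFunc K))) = lambdaCarrier K n)
    (M : Type*) [AddCommGroup M] [Module Λ M] [Module.Projective Λ M] [Nontrivial M] :
    ∃ (φ : M →ₗ[Λ] Λ) (m : M) (i : Fin n), (φ m).1 i i ∉ xPow K 1 := by
  by_contra! h
  obtain ⟨s, hs⟩ := Module.projective_def'.1 (inferInstance : Module.Projective Λ M)
  have expand : ∀ m : M, (s m).sum (fun b a => a • b) = m := fun m => LinearMap.congr_fun hs m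
  have main : ∀ (k : ℕ) (φ : M →ₗ[Λ] Λ) (m : M) (i j : Fin n), ∃ e : ℤ,
      (φ m).1 i j ∈ xPow K e ∧ 3 * (i : ℤ) - 3 * j + (k + 1) ≤ 2 * (n - 1) * e := by
    have base : ∀ (φ : M →ₗ[Λ] Λ) (m : M) (i j : Fin n), ∃ e : ℤ,
        (φ m).1 i j ∈ xPow K e ∧ 3 * (i : ℤ) - 3 * j + 1 ≤ 2 * (n - 1) * e := by
      intro φ m i j
      by_cases hij : i = j
      · subst hij
        exact ⟨1, h φ m i, by omega⟩
      · refine ⟨_, entry_mem hΛ _ i j, ?_⟩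
        have hij' : (i : ℕ) ≠ j := fun h => hij (Fin.ext h)
        unfold cExp
        split_ifs <;> simp <;> omega
    intro k
    induction k with
    | zero => simpa using base
    | succ k ih =>
      intro φ m i j
      have hm : φ m = ∑ b ∈ (s m).support, (s m b) * φ b := by
        conv_lhs => rw [← expand m]
        rw [Finsupp.sum, map_sum]
        simp
      have hsum : (φ m).1 i j = ∑ b ∈ (s m).support, ∑ l, (s m b).1 i l * (φ b).1 l j := by
        rw [hm, AddSubmonoidClass.coe_finsetSum, Matrix.sum_apply]
        rfl
      rw [hsum]
      have hadd : ∀ f g : RatFunc K,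
          (∃ e : ℤ, f ∈ xPow K e ∧ 3 * (i : ℤ) - 3 * j + ((k + 1 : ℕ) + 1) ≤ 2 * (n - 1) * e) →
          (∃ e : ℤ, g ∈ xPow K e ∧ 3 * (i : ℤ) - 3 * j + ((k + 1 : ℕ) + 1) ≤ 2 * (n - 1) * e) →
          ∃ e : ℤ, f + g ∈ xPow K e ∧
            3 * (i : ℤ) - 3 * j + ((k + 1 : ℕ) + 1) ≤ 2 * (n - 1) * e := by
        rintro f g ⟨e, hf, he⟩ ⟨e', hg, he'⟩
        rcases le_total e e' with hle | hle
        · exact ⟨e, add_mem_xPow hf (xPow_anti hle hg), he⟩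
        · exact ⟨e', add_mem_xPow (xPow_anti hle hf) hg, he'⟩
      have hzero : ∃ e : ℤ, (0 : RatFunc K) ∈ xPow K e ∧
            3 * (i : ℤ) - 3 * j + ((k + 1 : ℕ) + 1) ≤ 2 * (n - 1) * e := by
        refine ⟨3 * n + k + 2, zero_mem_xPow _, ?_⟩
        have h1 : (2 : ℤ) ≤ n - 1 := by omega
        push_cast
        nlinarith [i.2, j.2]
      refine Finset.sum_induction _ _ hadd hzero fun b _ =>
        Finset.sum_induction _ _ hadd hzero fun l _ => ?_
      obtain ⟨e, he, hle⟩ := base (Finsupp.lapply b ∘ₗ s) m i l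
      obtain ⟨e', he', hle'⟩ := ih φ b l j
      refine ⟨e + e', mul_mem_xPow he he', ?_⟩
      push_cast
      linarith
  have hzero : ∀ (φ : M →ₗ[Λ] Λ) (m : M), φ m = 0 := by
    intro φ m
    ext i j
    refine eq_zero_of_forall_mem_xPow fun N => ?_
    obtain ⟨e, he, hle⟩ := main (2 * n * N + 3 * n) φ m i j
    refine xPow_anti ?_ he
    by_contra! hlt
    have h1 : (2 : ℤ) ≤ n - 1 := by omega
    have := j.2
    have h2 : 2 * ((n : ℤ) - 1) * e ≤ 2 * (n - 1) * N := by
      apply mul_le_mul_of_nonneg_left <;> omega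
    push_cast at hle
    nlinarith
  obtain ⟨m, hm⟩ := exists_ne (0 : M)
  apply hm
  rw [← expand m]
  have : s m = 0 := by
    ext1 b
    exact hzero (Finsupp.lapply b ∘ₗ s) m
  rw [this, Finsupp.sum_zero_index]

/-- The exponents of `(s,t)` are those of the `i`-th column of `Λ`, shifted by `d`. -/
def IsColumn (n s t : ℕ) (i : Fin n) (d : ℤ) : Prop :=
  ∀ k : Fin n, dExp s t k = cExp n k i + d

lemma exists_isColumn_of_side {s t : ℕ} (hs : 1 ≤ s) (hst : s < t) (ht : t ≤ n)
    (h : t = s + 1 ∨ (s = 1 ∧ t = n)) : ∃ i d, IsColumn n s t i d := by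
  by_cases h' : t = s + 1
  · refine ⟨⟨s - 1, by omega⟩, 0, fun k => ?_⟩
    have := k.2
    simp only [dExp, cExp]
    split_ifs <;> omega
  · refine ⟨⟨n - 1, by omega⟩, 1, fun k => ?_⟩
    have := k.2
    simp only [dExp, cExp, and_true]
    split_ifs <;> omega

lemma exists_side_isColumn (hn : 3 ≤ n) (i : Fin n) : ∃ s t d, 1 ≤ s ∧ s < t ∧ t ≤ n ∧
    (t = s + 1 ∨ (s = 1 ∧ t = n)) ∧ IsColumn n s t i d := by
  have := i.2
  by_cases h : (i : ℕ) + 1 = n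
  · refine ⟨1, n, 1, le_rfl, by omega, le_rfl, by simp, fun k => ?_⟩
    have := k.2
    simp only [dExp, cExp]
    split_ifs <;> omega
  · refine ⟨i + 1, i + 2, 0, by omega, by omega, by omega, by simp, fun k => ?_⟩
    have := k.2
    simp only [dExp, cExp]
    split_ifs <;> omega

lemma dExp_le_cExp_add {s t : ℕ} (hs : 1 ≤ s) (hst : s < t) (ht : t ≤ n) (i k : Fin n) :
    dExp s t i ≤ cExp n i k + dExp s t k := by
  have := i.2
  have := k.2
  simp only [dExp, cExp]
  split_ifs <;> omega

lemma one_le_dExp_iff {s t k : ℕ} : 1 ≤ dExp s t k ↔ s ≤ k := by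
  unfold dExp
  split_ifs <;> omega

lemma two_le_dExp_iff {s t k : ℕ} (hst : s < t) : 2 ≤ dExp s t k ↔ t ≤ k := by
  unfold dExp
  split_ifs <;> omega

lemma dExp_zero {s : ℕ} (hs : 1 ≤ s) (t : ℕ) : dExp s t 0 = 0 := by
  simp [dExp, hs]

lemma dExp_nonneg (s t k : ℕ) : 0 ≤ dExp s t k := by
  unfold dExp
  split_ifs <;> simp

lemma cExp_nonneg {i j : Fin n} (h : (i : ℕ) ≠ 0 ∨ (j : ℕ) + 1 ≠ n) : 0 ≤ cExp n i j := by
  have := j.2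
  unfold cExp
  split_ifs <;> omega

lemma one_le_cExp {i j : Fin n} (h : (j : ℕ) < i) : 1 ≤ cExp n i j := by
  unfold cExp
  split_ifs <;> omega

lemma two_le_cExp {i j : Fin n} (h : (j : ℕ) + 1 < i) : 2 ≤ cExp n i j := by
  unfold cExp
  split_ifs <;> omega

lemma side_of_forall_le (hn : 3 ≤ n) {s t : ℕ} (hs : 1 ≤ s) (hst : s < t) (ht : t ≤ n)
    (i : Fin n) (h : ∀ k : Fin n, cExp n k i + dExp s t i ≤ dExp s t k) :
    t = s + 1 ∨ (s = 1 ∧ t = n) := by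
  have hi := i.2
  have h0 := h ⟨0, by omega⟩
  rw [dExp_zero hs] at h0
  have hd := dExp_nonneg s t i
  have hs' := one_le_dExp_iff (s := s) (t := t) (k := i)
  have ht' := two_le_dExp_iff hst (k := i)
  by_cases hin : (i : ℕ) + 1 = n
  · have hc0 : -1 ≤ cExp n ⟨0, by omega⟩ i := by
      unfold cExp
      split_ifs <;> omega
    have h1 := h ⟨1, by omega⟩
    have hc1 : 0 ≤ cExp n ⟨1, by omega⟩ i := cExp_nonneg (by simp)
    have hs1 := one_le_dExp_iff (s := s) (t := t) (k := 1)
    simp only at h1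
    omega
  · have hc0 : 0 ≤ cExp n ⟨0, by omega⟩ i := cExp_nonneg (by simp [hin])
    have h1 := h ⟨i + 1, by omega⟩
    have hc1 : 1 ≤ cExp n ⟨i + 1, by omega⟩ i := one_le_cExp (by simp)
    have hs1 := one_le_dExp_iff (s := s) (t := t) (k := i + 1)
    simp only at h1
    by_cases hin' : (i : ℕ) + 2 = n
    · omega
    · have h2 := h ⟨i + 2, by omega⟩
      have hc2 : 2 ≤ cExp n ⟨i + 2, by omega⟩ i := two_le_cExp (by simp)
      have ht2 := two_le_dExp_iff hst (k := i + 2)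
      simp only at h2
      omega

/-- The `i`-th column, scaled by `c`, as a `Λ`-linear map. -/
def colMap (Λ : Subalgebra K[X] (Matrix (Fin n) (Fin n) (RatFunc K))) (i : Fin n)
    (c : RatFunc K) : Λ →ₗ[Λ] (Fin n → RatFunc K) where
  toFun a k := c * a.1 k i
  map_add' a b := by
    ext k
    exact mul_add _ _ _
  map_smul' a b := by
    ext k
    rw [RingHom.id_apply, coe_smul_apply]
    change c * (∑ l, a.1 k l * b.1 l i) = _
    rw [Finset.mul_sum]
    exact Finset.sum_congr rfl fun l _ => by ring

lemma colMap_apply (i : Fin n) (c : RatFunc K) (a : Λ) (k : Fin n) :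
    colMap Λ i c a k = c * a.1 k i := rfl

lemma projective_of_isColumn
    (hΛ : (Λ : Set (Matrix (Fin n) (Fin n) (RatFunc K))) = lambdaCarrier K n)
    {s t : ℕ} {P : Submodule Λ (Fin n → RatFunc K)}
    (hP : (P : Set (Fin n → RatFunc K)) = ijSet K n s t)
    {i : Fin n} {d : ℤ} (hc : IsColumn n s t i d) : Module.Projective Λ P := by
  have memP : ∀ v, v ∈ P ↔ ∀ k : Fin n, v k ∈ xPow K (dExp s t k) := fun v => by
    rw [← SetLike.mem_coe, hP]; rfl
  have hX : (RatFunc.X : RatFunc K) ^ d ≠ 0 := zpow_ne_zero _ RatFunc.X_ne_zero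
  let r : Λ →ₗ[Λ] P := (colMap Λ i (RatFunc.X ^ d)).codRestrict P fun a => by
    rw [memP]
    intro k
    rw [colMap_apply, zpow_mul_mem_xPow_iff, hc k, add_sub_cancel_right]
    exact entry_mem hΛ a k i
  let j : P →ₗ[Λ] Λ :=
    { toFun := fun v => colElt hΛ i (fun k => RatFunc.X ^ (-d) * v.1 k) fun k => by
        rw [zpow_mul_mem_xPow_iff, sub_neg_eq_add, ← hc k]
        exact (memP _).1 v.2 k
      map_add' := fun v w => by
        ext k l
        rw [coe_add_apply]
        simp only [coe_colElt_apply]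
        split_ifs
        · exact mul_add _ _ _
        · rw [add_zero]
      map_smul' := fun a v => by
        ext k l
        rw [RingHom.id_apply, smul_eq_mul, coe_mul_apply]
        simp only [coe_colElt_apply]
        split_ifs
        · rw [Submodule.coe_smul, coe_smul_apply, Finset.mul_sum]
          exact Finset.sum_congr rfl fun l' _ => by ring
        · simp }
  refine Module.Projective.of_split j r (LinearMap.ext fun v => Subtype.ext (funext fun k => ?_))
  have h : (r (j v)).1 k = RatFunc.X ^ d * (RatFunc.X ^ (-d) * v.1 k) := by
    rw [LinearMap.codRestrict_apply, colMap_apply]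
    congr 1
    exact if_pos rfl
  rw [LinearMap.comp_apply, h, ← mul_assoc, _root_.zpow_neg, mul_inv_cancel₀ hX, one_mul,
    LinearMap.id_apply]

/-- A nonzero projective `Λ`-module surjects onto one of the modules attached to the sides. -/
lemma exists_surjective (hn : 3 ≤ n)
    (hΛ : (Λ : Set (Matrix (Fin n) (Fin n) (RatFunc K))) = lambdaCarrier K n)
    (M : Type*) [AddCommGroup M] [Module Λ M] [Module.Projective Λ M] [Nontrivial M] :
    ∃ i : Fin n, ∀ (s t : ℕ) (d : ℤ) (P : Submodule Λ (Fin n → RatFunc K)),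
      (P : Set (Fin n → RatFunc K)) = ijSet K n s t → IsColumn n s t i d →
      ∃ ψ : M →ₗ[Λ] P, Function.Surjective ψ := by
  obtain ⟨φ, m₀, i, hφ⟩ := exists_functional hn hΛ M
  refine ⟨i, fun s t d P hP hc => ?_⟩
  have memP : ∀ v, v ∈ P ↔ ∀ k : Fin n, v k ∈ xPow K (dExp s t k) := fun v => by
    rw [← SetLike.mem_coe, hP]; rfl
  have hX : (RatFunc.X : RatFunc K) ^ d ≠ 0 := zpow_ne_zero _ RatFunc.X_ne_zero
  let I : Ideal K[X] :=
    { carrier := {p | ∃ m, (φ m).1 i i = algebraMap K[X] (RatFunc K) p}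
      add_mem' := by
        rintro p q ⟨m, hm⟩ ⟨m', hm'⟩
        exact ⟨m + m', by rw [map_add, map_add, ← hm, ← hm']; rfl⟩
      zero_mem' := ⟨0, by simp⟩
      smul_mem' := by
        rintro p q ⟨m, hm⟩
        refine ⟨algebraMap K[X] Λ p • m, ?_⟩
        have h : (φ (algebraMap K[X] Λ p • m)).1 = p • (φ m).1 := by
          rw [map_smul, smul_eq_mul, ← Algebra.smul_def]
          rfl
        rw [h, Matrix.smul_apply, hm, smul_eq_mul, map_mul, Algebra.smul_def] }
  have memI : ∀ p, p ∈ I ↔ ∃ m, (φ m).1 i i = algebraMap K[X] (RatFunc K) p := fun _ => Iff.rfl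
  have hdiag : ∀ m, ∃ p, (φ m).1 i i = algebraMap K[X] (RatFunc K) p := fun m => by
    have := entry_mem hΛ (φ m) i i
    rwa [cExp_self (by omega), mem_xPow_zero] at this
  set g := Submodule.IsPrincipal.generator I
  have hgX : ¬ X ∣ g := by
    intro hdvd
    obtain ⟨p, hp⟩ := hdiag m₀
    have hpI : p ∈ I := ⟨m₀, hp⟩
    rw [Submodule.IsPrincipal.mem_iff_generator_dvd] at hpI
    rw [hp, algebraMap_mem_xPow_one] at hφ
    exact hφ (hdvd.trans hpI)
  have hg0 : algebraMap K[X] (RatFunc K) g ≠ 0 :=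
    RatFunc.algebraMap_ne_zero fun h => hgX (h ▸ dvd_zero _)
  have hcop : IsCoprime g X := (Polynomial.irreducible_X.coprime_iff_not_dvd.2 hgX).symm
  have hdvd : ∀ m k, (algebraMap K[X] (RatFunc K) g)⁻¹ * (φ m).1 k i ∈ xPow K (cExp n k i) := by
    intro m k
    obtain ⟨p, hp⟩ := entry_mem hΛ (φ m) k i
    obtain ⟨N, hN⟩ := Int.le.dest (cExp_add_nonneg (by omega) i k)
    have hmem : X ^ N * p ∈ I := by
      let a : Λ := colElt hΛ k (fun l => if l = i then RatFunc.X ^ (cExp n i k) else 0) fun l => by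
        split_ifs with h
        · exact h ▸ zpow_mem_xPow _
        · exact zero_mem_xPow _
      refine ⟨a • m, ?_⟩
      rw [map_smul, smul_eq_mul, colElt_mul_apply, if_pos rfl, hp, ← mul_assoc,
        ← zpow_add₀ RatFunc.X_ne_zero, map_mul, map_pow, RatFunc.algebraMap_X, ← zpow_natCast]
      congr 2
      omega
    rw [Submodule.IsPrincipal.mem_iff_generator_dvd] at hmem
    obtain ⟨q, rfl⟩ := (hcop.pow_right (n := N)).dvd_of_dvd_mul_left hmem
    refine ⟨q, ?_⟩
    rw [hp, map_mul]
    field_simp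
  let ψ : M →ₗ[Λ] P :=
    ((colMap Λ i (RatFunc.X ^ d * (algebraMap K[X] (RatFunc K) g)⁻¹)).comp φ).codRestrict P
      fun m => by
        rw [memP]
        intro k
        rw [LinearMap.comp_apply, colMap_apply, mul_assoc, zpow_mul_mem_xPow_iff, hc k,
          add_sub_cancel_right]
        exact hdvd m k
  refine ⟨ψ, fun v => ?_⟩
  obtain ⟨m₁, hm₁⟩ := (memI g).1 (Submodule.IsPrincipal.generator_mem I)
  refine ⟨colElt hΛ i (fun k => RatFunc.X ^ (-d) * v.1 k) (fun k => ?_) • m₁, ?_⟩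
  · rw [zpow_mul_mem_xPow_iff, sub_neg_eq_add, ← hc k]
    exact (memP _).1 v.2 k
  · ext k
    rw [map_smul, Submodule.coe_smul, colElt_smul_apply, LinearMap.codRestrict_apply,
      LinearMap.comp_apply, colMap_apply, hm₁, _root_.zpow_neg]
    field_simp

/-- The generator `x^d e_k` of the `k`-th coordinate of `(s,t)`. -/
lemma single_mem {s t : ℕ} {P : Submodule Λ (Fin n → RatFunc K)}
    (hP : (P : Set (Fin n → RatFunc K)) = ijSet K n s t) (k : Fin n) :
    (Pi.single k (RatFunc.X ^ dExp s t k) : Fin n → RatFunc K) ∈ P := by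
  rw [← SetLike.mem_coe, hP]
  intro l
  by_cases h : l = k
  · subst h
    rw [Pi.single_eq_same]
    exact zpow_mem_xPow _
  · rw [Pi.single_eq_of_ne h]
    exact zero_mem_xPow _

lemma nontrivial_of_eq_ijSet (hn : 0 < n) {s t : ℕ} {P : Submodule Λ (Fin n → RatFunc K)}
    (hP : (P : Set (Fin n → RatFunc K)) = ijSet K n s t) : Nontrivial P := by
  refine ⟨⟨_, single_mem hP ⟨0, hn⟩⟩, 0, fun h => ?_⟩
  have h' : (Pi.single ⟨0, hn⟩ (RatFunc.X ^ dExp s t 0) : Fin n → RatFunc K) ⟨0, hn⟩ = 0 :=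
    congrFun (congrArg Subtype.val h) ⟨0, hn⟩
  exact zpow_ne_zero _ RatFunc.X_ne_zero ((Pi.single_eq_same _ _).symm.trans h')

/-- If `(s,t)` is projective, then it is attached to a side: its exponents dominate a shifted column
of `Λ`. -/
lemma side_of_projective (hn : 3 ≤ n)
    (hΛ : (Λ : Set (Matrix (Fin n) (Fin n) (RatFunc K))) = lambdaCarrier K n)
    {s t : ℕ} (hs : 1 ≤ s) (hst : s < t) (ht : t ≤ n) {P : Submodule Λ (Fin n → RatFunc K)}
    (hP : (P : Set (Fin n → RatFunc K)) = ijSet K n s t) [Module.Projective Λ P] :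
    t = s + 1 ∨ (s = 1 ∧ t = n) := by
  have memP : ∀ v, v ∈ P ↔ ∀ k : Fin n, v k ∈ xPow K (dExp s t k) := fun v => by
    rw [← SetLike.mem_coe, hP]; rfl
  let w (k : Fin n) : P := ⟨_, single_mem hP k⟩
  have hw : ∀ k l, (w k).1 l = if l = k then RatFunc.X ^ dExp s t k else 0 := fun k l =>
    Pi.single_apply _ _ _
  have := nontrivial_of_eq_ijSet (by omega) hP
  obtain ⟨φ, m, i, hφ⟩ := exists_functional hn hΛ P
  refine side_of_forall_le hn hs hst ht i fun k => ?_
  by_contra! hlt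
  obtain ⟨p, hp⟩ := (memP _).1 m.2 i
  let a (l : Fin n) (f : RatFunc K) (hf : f ∈ xPow K (cExp n i l)) : Λ :=
    colElt hΛ l (fun l' => if l' = i then f else 0) fun l' => by
      split_ifs with h
      · exact h ▸ hf
      · exact zero_mem_xPow _
  have ha : ∀ l f hf, ∀ v : P, (a l f hf • v).1 = fun l' => if l' = i then f * v.1 l else 0 := by
    intro l f hf v
    ext l'
    rw [Submodule.coe_smul, colElt_smul_apply, ite_mul, zero_mul]
  have ha' : ∀ l f hf, ∀ v : P, (φ (a l f hf • v)).1 i i = f * (φ v).1 l i := by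
    intro l f hf v
    rw [map_smul, smul_eq_mul, colElt_mul_apply, if_pos rfl]
  have hcii : cExp n i i = 0 := cExp_self (by omega) i
  have h0 : ∀ p, algebraMap K[X] (RatFunc K) p ∈ xPow K (cExp n i i) := fun p => by
    rw [hcii, mem_xPow_zero]
    exact ⟨p, rfl⟩
  have hN : 0 ≤ cExp n i k + dExp s t k - dExp s t i := by
    have := dExp_le_cExp_add hs hst ht i k
    omega
  have h1 : a i _ (h0 1) • m = a i _ (h0 p) • w i := by
    ext1
    rw [ha _ _ (h0 1), ha _ _ (h0 p), hw, if_pos rfl, hp]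
    ext l
    split_ifs
    · rw [map_one, one_mul, mul_comm]
    · rfl
  have h1' := ha' i _ (h0 1) m
  rw [h1, ha' i _ (h0 p), map_one, one_mul] at h1'
  have hXN : (RatFunc.X : RatFunc K) ^ (cExp n i k + dExp s t k - dExp s t i) ∈
      xPow K (cExp n i i) := xPow_anti (by omega) (zpow_mem_xPow _)
  have h2 : a k (RatFunc.X ^ cExp n i k) (zpow_mem_xPow _) • w k = a i _ hXN • w i := by
    ext1
    rw [ha _ _ (zpow_mem_xPow _), ha _ _ hXN, hw, hw, if_pos rfl, if_pos rfl,
      ← zpow_add₀ RatFunc.X_ne_zero, ← zpow_add₀ RatFunc.X_ne_zero, sub_add_cancel]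
  have h2' := ha' k _ (zpow_mem_xPow _) (w k)
  rw [h2, ha' i _ hXN] at h2'
  have h3 := mul_mem_xPow (zpow_mem_xPow (cExp n i k)) (entry_mem hΛ (φ (w k)) k i)
  rw [← h2', zpow_mul_mem_xPow_iff] at h3
  have h4 := mul_mem_xPow (h0 p) (xPow_anti (c := 1) (by omega) h3)
  rw [hcii, zero_add, h1'] at h4
  exact hφ h4

end Order

/-- For `1 ≤ s < t ≤ n`, the `Λ`-module `(s,t)` is projective if and only if `t = s + 1` or
`(s,t) = (1,n)`. Consequently, an indecomposable Cohen–Macaulay `Λ`-module is projective if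
and only if it is isomorphic to one of the `n` modules `(1,2), (2,3), …, (n−1,n), (1,n)`
corresponding to the sides of the polygon. -/
theorem statement6 (K : Type) [Field K] (n : ℕ) (hn : 3 ≤ n)
    (Λ : Subalgebra (Polynomial K) (Matrix (Fin n) (Fin n) (RatFunc K)))
    (hΛ : (Λ : Set (Matrix (Fin n) (Fin n) (RatFunc K))) = lambdaCarrier K n)
    (E : ℕ → ℕ → Submodule ↥Λ (Fin n → RatFunc K))
    (hE : ∀ i j : ℕ, 1 ≤ i → i < j → j ≤ n →
      (E i j : Set (Fin n → RatFunc K)) = ijSet K n i j) :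
    (∀ s t : ℕ, 1 ≤ s → s < t → t ≤ n →
      (Module.Projective ↥Λ ↥(E s t) ↔ (t = s + 1 ∨ (s = 1 ∧ t = n)))) ∧
    (∀ (M : Type u) [AddCommGroup M] [Module ↥Λ M]
      [Module (Polynomial K) M] [IsScalarTower (Polynomial K) ↥Λ M],
      Module.Finite (Polynomial K) M →
      NoZeroSMulDivisors (Polynomial K) M →
      (Nontrivial M ∧ ¬ ∃ A B : Submodule ↥Λ M, IsCompl A B ∧ A ≠ ⊥ ∧ B ≠ ⊥) →
      (Module.Projective ↥Λ M ↔
        ∃ s t : ℕ, 1 ≤ s ∧ s < t ∧ t ≤ n ∧ (t = s + 1 ∨ (s = 1 ∧ t = n)) ∧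
          Nonempty (M ≃ₗ[↥Λ] ↥(E s t)))) := by
  have part1 : ∀ s t : ℕ, 1 ≤ s → s < t → t ≤ n →
      (Module.Projective ↥Λ ↥(E s t) ↔ (t = s + 1 ∨ (s = 1 ∧ t = n))) := by
    intro s t hs hst ht
    refine ⟨fun _ => side_of_projective hn hΛ hs hst ht (hE s t hs hst ht), fun h => ?_⟩
    obtain ⟨i, d, hc⟩ := exists_isColumn_of_side hs hst ht h
    exact projective_of_isColumn hΛ (hE s t hs hst ht) hc
  refine ⟨part1, ?_⟩
  intro M _ _ _ _ _ _ ⟨_, hind⟩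
  constructor
  · intro _
    obtain ⟨i, hi⟩ := exists_surjective hn hΛ M
    obtain ⟨s, t, d, hs, hst, ht, hside, hc⟩ := exists_side_isColumn hn i
    obtain ⟨ψ, hψ⟩ := hi s t d (E s t) (hE s t hs hst ht) hc
    refine ⟨s, t, hs, hst, ht, hside, ⟨LinearEquiv.ofBijective ψ ⟨?_, hψ⟩⟩⟩
    have := (part1 s t hs hst ht).2 hside
    obtain ⟨σ, hσ⟩ := Module.projective_lifting_property ψ LinearMap.id hψ
    by_contra hinj
    have hσ' : Function.LeftInverse ψ σ := LinearMap.congr_fun hσ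
    have hidem : IsIdempotentElem (σ ∘ₗ ψ) := LinearMap.ext fun m => congrArg σ (hσ' (ψ m))
    refine hind ⟨_, _, LinearMap.IsIdempotentElem.isCompl hidem, fun h => ?_, fun h => ?_⟩
    · have := nontrivial_of_eq_ijSet (by omega) (hE s t hs hst ht)
      obtain ⟨v, hv⟩ := exists_ne (0 : E s t)
      rw [LinearMap.range_eq_bot] at h
      have h0 : σ (ψ (σ v)) = 0 := LinearMap.congr_fun h (σ v)
      rw [hσ' v] at h0
      exact hv (by rw [← hσ' v, h0, map_zero])
    · exact hinj (Function.Injective.of_comp (f := σ) (LinearMap.ker_eq_bot.1 h))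
  · rintro ⟨s, t, hs, hst, ht, hside, ⟨e⟩⟩
    have := (part1 s t hs hst ht).2 hside
    exact Module.Projective.of_equiv e.symm
end
end

section
/- Let 0 → A → B → C → 0 be a non-split short exact sequence of Λ-modules in which A and C are indecomposable Cohen–Macaulay Λ-modules. Then either there exist indices 1 ≤ s < s' < t < t' ≤ n with A ≅ (s,t), B ≅ (s,t') ⊕ (s',t) and C ≅ (s',t'), or there exist indices 1 ≤ s' < s < t' < t ≤ n with A ≅ (s,t), B ≅ (s',s) ⊕ (t',t) and C ≅ (s',t'). -/
set_option synthInstance.maxHeartbeats 1000000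
set_option maxHeartbeats 1000000

open Polynomial Matrix

noncomputable section

section Chains

variable {K : Type} [Field K]

/-- The exponents of the rank one lattice `(i, j)`, as natural numbers. -/
def dNat (i j k : ℕ) : ℕ := if k < i then 0 else if k < j then 1 else 2

lemma dNat_cases (i j k : ℕ) (h : i < j) :
    (k < i ∧ dNat i j k = 0) ∨ (i ≤ k ∧ k < j ∧ dNat i j k = 1) ∨ (j ≤ k ∧ dNat i j k = 2) := by
  unfold dNat; split_ifs <;> omega

lemma dExp_eq_dNat (i j k : ℕ) : dExp i j k = (dNat i j k : ℤ) := by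
  unfold dExp dNat
  simp only [Nat.succ_le_iff, ← Nat.succ_eq_add_one]
  split_ifs <;> rfl

/-- A chain of submodules of `V` describing the rows of a `Λ`-lattice. -/
structure RowChain {V : Type*} [AddCommGroup V] [Module K[X] V] (n : ℕ)
    (L : ℕ → Submodule K[X] V) : Prop where
  zero : L 0 = ⊤
  succ_le : ∀ k, k + 1 < n → L (k + 1) ≤ L k
  smul_mem : ∀ k, k + 1 < n → ∀ u ∈ L k, (X : K[X]) • u ∈ L (k + 1)
  exists_smul : ∀ u ∈ L (n - 1), ∃ u', u = (X : K[X]) • u'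
  sq_smul_mem : ∀ u, (X ^ 2 : K[X]) • u ∈ L (n - 1)

lemma RowChain.le {V : Type*} [AddCommGroup V] [Module K[X] V] {n : ℕ}
    {L : ℕ → Submodule K[X] V} (h : RowChain n L) {j k : ℕ} (hjk : j ≤ k) (hk : k < n) :
    L k ≤ L j := by
  induction k, hjk using Nat.le_induction with
  | base => exact le_rfl
  | succ k _ ih => exact (h.succ_le k hk).trans (ih (by omega))

/-- A functional on a free module separating a vector from a submodule containing `X • V`. -/
lemma exists_functional_s8 {V : Type*} [AddCommGroup V] [Module K[X] V] [Module.Finite K[X] V]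
    [Module.Free K[X] V] (P : Submodule K[X] V) (hP : ∀ u, (X : K[X]) • u ∈ P) (v : V)
    (hv : v ∉ P) :
    ∃ (φ : V →ₗ[K[X]] K[X]) (w : V), φ w = 1 ∧ (φ v).coeff 0 = 1 ∧ ∀ u ∈ P, X ∣ φ u := by
  classical
  let b := Module.Free.chooseBasis K[X] V
  set ι := Module.Free.ChooseBasisIndex K[X] V
  let red : (ι → K[X]) →ₗ[K] (ι → K) := (Polynomial.lcoeff K 0).compLeft ι
  let P' : Submodule K[X] (ι → K[X]) := P.map b.equivFun.toLinearMap
  let Pbar : Submodule K (ι → K) := (P'.restrictScalars K).map red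
  have hv' : red (b.equivFun v) ∉ Pbar := by
    rintro ⟨p, hp, hpv⟩
    obtain ⟨u, hu, rfl⟩ := hp
    apply hv
    have : ∀ i, X ∣ b.equivFun (v - u) i := by
      intro i
      have := congrFun hpv i
      rw [Polynomial.X_dvd_iff]
      simp only [red, LinearMap.compLeft_apply, Function.comp, Polynomial.lcoeff_apply,
        LinearEquiv.coe_coe] at this
      rw [map_sub, Pi.sub_apply, Polynomial.coeff_sub, this, sub_self]
    choose q hq using this
    have h2 : v - u = (X : K[X]) • b.equivFun.symm q := by
      apply b.equivFun.injective
      ext1 i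
      rw [hq, map_smul, LinearEquiv.apply_symm_apply, Pi.smul_apply, smul_eq_mul]
    have h3 := P.add_mem (hP (b.equivFun.symm q)) hu
    rwa [← h2, sub_add_cancel] at h3
  obtain ⟨f, hf1, hf2⟩ := Submodule.exists_le_ker_of_notMem hv'
  have hcoef : ∀ y : ι → K, f y = ∑ i, y i * f (Pi.single i 1) := by
    intro y
    conv_lhs => rw [pi_eq_sum_univ' y, map_sum]
    refine Finset.sum_congr rfl fun i _ => ?_
    rw [map_smul, smul_eq_mul]
  let φ0 : (ι → K[X]) →ₗ[K[X]] K[X] :=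
    ∑ i, (C (f (Pi.single i 1)) : K[X]) • LinearMap.proj i
  have hφ0 : ∀ y, (φ0 y).coeff 0 = f (red y) := by
    intro y
    rw [hcoef]
    simp [φ0, red, mul_comm]
  set a := f (red (b.equivFun v)) with ha
  refine ⟨(C a⁻¹ : K[X]) • φ0 ∘ₗ b.equivFun.toLinearMap,
    b.equivFun.symm fun i => C (red (b.equivFun v) i), ?_, ?_, ?_⟩
  · simp only [LinearMap.smul_apply, LinearMap.comp_apply, LinearEquiv.coe_coe,
      LinearEquiv.apply_symm_apply, smul_eq_mul]
    have : φ0 (fun i => C (red (b.equivFun v) i)) = C a := by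
      rw [ha, hcoef, map_sum]
      simp [φ0, mul_comm]
    rw [this, ← C_mul, inv_mul_cancel₀ hf1, C_1]
  · simp only [LinearMap.smul_apply, LinearMap.comp_apply, LinearEquiv.coe_coe,
      smul_eq_mul, coeff_C_mul, hφ0]
    exact inv_mul_cancel₀ hf1
  · intro u hu
    rw [Polynomial.X_dvd_iff]
    simp only [LinearMap.smul_apply, LinearMap.comp_apply, LinearEquiv.coe_coe,
      smul_eq_mul, coeff_C_mul, hφ0]
    have : f (red (b.equivFun u)) = 0 := hf2 ⟨_, ⟨u, hu, rfl⟩, rfl⟩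
    rw [this, mul_zero]

/-- Every nonzero chain has a rank one direct summand. -/
lemma RowChain.exists_summand {V : Type*} [AddCommGroup V] [Module K[X] V]
    [Module.Finite K[X] V] [Module.Free K[X] V] [Nontrivial V] {n : ℕ}
    {L : ℕ → Submodule K[X] V} (h : RowChain n L) (hn : 0 < n) :
    ∃ (a b : ℕ) (v : V) (φ : V →ₗ[K[X]] K[X]), 1 ≤ a ∧ a < b ∧ b ≤ n ∧ φ v = 1 ∧
      (∀ k < n, (X ^ dNat a b k : K[X]) • v ∈ L k) ∧
      ∀ k < n, ∀ u ∈ L k, X ^ dNat a b k ∣ φ u := by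
  classical
  have hex : ∃ a, a < n ∧ ∀ u ∈ L a, ∃ u', u = (X : K[X]) • u' :=
    ⟨n - 1, by omega, h.exists_smul⟩
  obtain ⟨v0, hv0⟩ : ∃ v : V, ¬ ∃ u', v = (X : K[X]) • u' := by
    by_contra! hcon
    let b := Module.Free.chooseBasis K[X] V
    have : Nonempty (Module.Free.ChooseBasisIndex K[X] V) := b.index_nonempty
    let i : Module.Free.ChooseBasisIndex K[X] V := Classical.arbitrary _
    obtain ⟨u', hu'⟩ := hcon (b i)
    have h1 := congrArg (fun y => (b.repr y i).coeff 0) hu'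
    simp at h1
  set a := Nat.find hex with ha
  obtain ⟨han, haX⟩ := Nat.find_spec hex
  rw [← ha] at han haX
  have ha0 : 1 ≤ a := by
    rw [Nat.one_le_iff_ne_zero]
    intro h0
    rw [h0, h.zero] at haX
    exact hv0 (haX v0 trivial)
  obtain ⟨v1, hv1, hv1X⟩ : ∃ v ∈ L (a - 1), ¬ ∃ u', v = (X : K[X]) • u' := by
    have := Nat.find_min hex (m := a - 1) (by omega)
    push Not at this
    obtain ⟨v, hv, hv'⟩ := this (by omega)
    exact ⟨v, hv, by simpa using hv'⟩
  have hexb : ∃ b, b = n ∨ ∀ v ∈ L (a - 1), (¬ ∃ u', v = (X : K[X]) • u') →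
      (X : K[X]) • v ∉ L b := ⟨n, Or.inl rfl⟩
  set b := Nat.find hexb with hb
  have hbspec := Nat.find_spec hexb
  rw [← hb] at hbspec
  have hbn : b ≤ n := Nat.find_min' hexb (Or.inl rfl)
  have hab : a < b := by
    by_contra! hba
    rcases hbspec with h1 | h1
    · omega
    · refine h1 v1 hv1 hv1X (h.le hba han ?_)
      have := h.smul_mem (a - 1) (by omega) v1 hv1
      rwa [Nat.sub_add_cancel ha0] at this
  obtain ⟨v, hv, hvX, hvb⟩ : ∃ v ∈ L (a - 1), (¬ ∃ u', v = (X : K[X]) • u') ∧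
      (X : K[X]) • v ∈ L (b - 1) := by
    have := Nat.find_min hexb (m := b - 1) (by omega)
    push Not at this
    obtain ⟨v, hv, hv', hv''⟩ := this.2
    exact ⟨v, hv, by simpa using hv', hv''⟩
  obtain ⟨P, hPX, hPv, hPb⟩ : ∃ P : Submodule K[X] V, (∀ u, (X : K[X]) • u ∈ P) ∧ v ∉ P ∧
      ∀ u, b < n → (X : K[X]) • u ∈ L b → u ∈ P := by
    by_cases hbn' : b < n
    · refine ⟨(L b).comap (LinearMap.lsmul K[X] V X), fun u => ?_, ?_, fun u _ hu => hu⟩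
      · have := h.le (j := b) (k := n - 1) (by omega) (by omega) (h.sq_smul_mem u)
        rwa [pow_two, mul_smul] at this
      · rcases hbspec with h1 | h1
        · omega
        · exact h1 v hv hvX
    · refine ⟨LinearMap.range (LinearMap.lsmul K[X] V X), fun u => ⟨u, rfl⟩, ?_,
        fun u hu => absurd hu hbn'⟩
      rintro ⟨u, hu⟩
      exact hvX ⟨u, hu.symm⟩
  obtain ⟨φ, w, hw, hφv, hφP⟩ := exists_functional_s8 P hPX v hPv
  have hcop : IsCoprime (φ v) (X ^ 2) := by
    apply IsCoprime.pow_right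
    refine ((Polynomial.irreducible_X.coprime_iff_not_dvd).2 ?_).symm
    rw [Polynomial.X_dvd_iff, hφv]
    exact one_ne_zero
  obtain ⟨p, q, hpq⟩ := hcop
  have hsq : ∀ k < n, ∀ u, (X ^ 2 : K[X]) • u ∈ L k := fun k hk u =>
    h.le (by omega) (by omega) (h.sq_smul_mem u)
  refine ⟨a, b, p • v + q • (X ^ 2 : K[X]) • w, φ, ha0, hab, hbn, ?_, ?_, ?_⟩
  · rw [map_add, map_smul, map_smul, map_smul, hw]
    simpa using hpq
  · intro k hk
    rcases dNat_cases a b k hab with ⟨h1, h2⟩ | ⟨h1, h2, h3⟩ | ⟨h1, h2⟩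
    · rw [h2, pow_zero, one_smul]
      exact (L k).add_mem ((L k).smul_mem _ (h.le (by omega) (by omega) hv))
        ((L k).smul_mem _ (hsq k hk w))
    · rw [h3, pow_one, smul_add, smul_comm X p]
      exact (L k).add_mem ((L k).smul_mem _ (h.le (by omega) (by omega) hvb))
        ((L k).smul_mem _ ((L k).smul_mem _ (hsq k hk w)))
    · rw [h2]
      exact hsq k hk _
  · intro k hk u hu
    rcases dNat_cases a b k hab with ⟨h1, h2⟩ | ⟨h1, h2, h3⟩ | ⟨h1, h2⟩
    · simp [h2]
    · obtain ⟨u', rfl⟩ := haX u (h.le h1 hk hu)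
      rw [h3, pow_one, map_smul]
      exact Dvd.intro _ rfl
    · have hub := h.le h1 hk hu
      obtain ⟨u', rfl⟩ := haX u (h.le (by omega) hk hu)
      rw [h2, map_smul, smul_eq_mul, pow_two]
      exact mul_dvd_mul_left _ (hφP _ (hPb _ (by omega) hub))

lemma dNat_le_two (i j k : ℕ) : dNat i j k ≤ 2 := by
  unfold dNat; split_ifs <;> omega

lemma X_pow_dvd_of_dvd_mul {a b : ℕ} {z : K[X]} (h : (X : K[X]) ^ a ∣ X ^ b * z) :
    X ^ (a - b) ∣ z := by
  rcases le_total a b with hab | hab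
  · simp [Nat.sub_eq_zero_of_le hab]
  · obtain ⟨c, rfl⟩ := Nat.exists_eq_add_of_le hab
    rw [pow_add, mul_dvd_mul_iff_left (pow_ne_zero _ X_ne_zero)] at h
    simpa using h

/-- The chain of a rank two extension of two rank one chains, with kernel `(s, t)` spanned by
`(0, 1)` and quotient `(s', t')` spanned by the image of `(1, 0)`. -/
structure ExtChain (n s t s' t' : ℕ) (L : ℕ → Submodule K[X] (K[X] × K[X])) : Prop
    extends RowChain n L where
  one_le : 1 ≤ s
  lt : s < t
  le : t ≤ n
  one_le' : 1 ≤ s'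
  lt' : s' < t'
  le' : t' ≤ n
  mem_iff : ∀ k < n, ∀ β, (0, β) ∈ L k ↔ X ^ dNat s t k ∣ β
  dvd_fst : ∀ k < n, ∀ α β, (α, β) ∈ L k → X ^ dNat s' t' k ∣ α
  exists_mem : ∀ k < n, ∃ β, (X ^ dNat s' t' k, β) ∈ L k

/-- Slopes (scaled by `X ^ 2`) for an extension chain: each `L k` is determined by the class
of `G k` modulo a power of `X`. -/
structure IsSlope (n s t s' t' : ℕ) (L : ℕ → Submodule K[X] (K[X] × K[X]))
    (G : ℕ → K[X]) : Prop where
  mem_iff : ∀ k < n, ∀ g, X ^ (2 + dNat s t k - dNat s' t' k) ∣ G k - g → ∀ α β,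
    (α, β) ∈ L k ↔ X ^ dNat s' t' k ∣ α ∧ X ^ (2 + dNat s t k) ∣ X ^ 2 * β - α * g
  sq_dvd : X ^ 2 ∣ G 0
  dvd_sub : ∀ k l m, k ≤ l → l < n →
    (∀ j, k ≤ j → j ≤ l → m ≤ 2 + dNat s t j - dNat s' t' j) → X ^ m ∣ G k - G l
  dvd_sub_last : X ^ min 2 (2 + dNat s t (n - 1) - dNat s' t' (n - 1)) ∣ G 0 - G (n - 1)

lemma ExtChain.exists_isSlope {n s t s' t' : ℕ} {L : ℕ → Submodule K[X] (K[X] × K[X])}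
    (h : ExtChain n s t s' t' L) : ∃ G, IsSlope n s t s' t' L G := by
  have h1 := h.one_le
  have h2 := h.lt
  have h3 := h.le
  have h1' := h.one_le'
  have h2' := h.lt'
  have h3' := h.le'
  have hex : ∀ k, ∃ β, k < n → (X ^ dNat s' t' k, β) ∈ L k := fun k => by
    by_cases hk : k < n
    · obtain ⟨β, hβ⟩ := h.exists_mem k hk
      exact ⟨β, fun _ => hβ⟩
    · exact ⟨0, fun hk' => absurd hk' hk⟩
  choose H hH using hex
  set G : ℕ → K[X] := fun k => X ^ (2 - dNat s' t' k) * H k with hG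
  have hGX : ∀ k, X ^ dNat s' t' k * G k = X ^ 2 * H k := fun k => by
    rw [hG, ← mul_assoc, ← pow_add, Nat.add_sub_cancel' (dNat_le_two _ _ _)]
  have hmem : ∀ k < n, ∀ α β, (α, β) ∈ L k ↔
      X ^ dNat s' t' k ∣ α ∧ X ^ (2 + dNat s t k) ∣ X ^ 2 * β - α * G k := by
    intro k hk α β
    have key : ∀ α', (X ^ dNat s' t' k * α', β) ∈ L k ↔
        X ^ (2 + dNat s t k) ∣ X ^ 2 * β - X ^ dNat s' t' k * α' * G k := by
      intro α'
      have e1 : ((X ^ dNat s' t' k * α', β) : K[X] × K[X]) =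
          α' • (X ^ dNat s' t' k, H k) + (0, β - α' * H k) := by
        ext1 <;> simp [mul_comm]
      have e2 : X ^ 2 * β - X ^ dNat s' t' k * α' * G k = X ^ 2 * (β - α' * H k) := by
        linear_combination (-α') * hGX k
      rw [e1, (L k).add_mem_iff_right ((L k).smul_mem _ (hH k hk)), h.mem_iff k hk, e2, pow_add,
        mul_dvd_mul_iff_left (pow_ne_zero _ X_ne_zero)]
    constructor
    · intro hm
      obtain ⟨α', rfl⟩ := h.dvd_fst k hk _ _ hm
      exact ⟨Dvd.intro _ rfl, (key α').1 hm⟩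
    · rintro ⟨⟨α', rfl⟩, hd⟩
      exact (key α').2 hd
  have hstep : ∀ k, k + 1 < n → ∀ m, m ≤ 2 + dNat s t k - dNat s' t' k →
      m ≤ 2 + dNat s t (k + 1) - dNat s' t' (k + 1) → X ^ m ∣ G k - G (k + 1) := by
    intro k hk m hm1 hm2
    have a1 := ((hmem k (by omega) _ _).1 (h.succ_le k hk (hH (k + 1) hk))).2
    have a2 := h.smul_mem k hk _ (hH k (by omega))
    rw [Prod.smul_mk, hmem _ hk] at a2
    have a2 := a2.2
    simp only [smul_eq_mul] at a2
    rw [← hGX, ← mul_sub] at a1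
    have e : X ^ 2 * (X * H k) - X * X ^ dNat s' t' k * G (k + 1) =
        X ^ (dNat s' t' k + 1) * (G k - G (k + 1)) := by
      linear_combination (-X) * hGX k
    rw [e] at a2
    have a1 := X_pow_dvd_of_dvd_mul a1
    have a2 := X_pow_dvd_of_dvd_mul a2
    rw [dvd_sub_comm] at a1
    have : m ≤ 2 + dNat s t k - dNat s' t' (k + 1) ∨
        m ≤ 2 + dNat s t (k + 1) - (dNat s' t' k + 1) := by
      have := dNat_cases s t k h2
      have := dNat_cases s t (k + 1) h2
      have := dNat_cases s' t' k h2'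
      have := dNat_cases s' t' (k + 1) h2'
      omega
    rcases this with hm | hm
    · exact (pow_dvd_pow _ hm).trans a1
    · exact (pow_dvd_pow _ hm).trans a2
  refine ⟨G, ⟨?_, ?_, ?_, ?_⟩⟩
  · intro k hk g hg α β
    rw [hmem k hk]
    refine and_congr_right fun hα => ?_
    have hd : X ^ (2 + dNat s t k) ∣ α * (G k - g) := by
      have := mul_dvd_mul hα hg
      rw [← pow_add] at this
      refine (pow_dvd_pow _ ?_).trans this
      have := dNat_le_two s' t' k
      omega
    rw [← dvd_add_left hd]
    ring_nf
  · have : dNat s' t' 0 = 0 := by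
      have := dNat_cases s' t' 0 h2'
      omega
    simp [hG, this]
  · intro k l m hkl
    induction l, hkl using Nat.le_induction with
    | base => intro _ _; simp
    | succ l hkl ih =>
      intro hl hm
      have a1 := ih (by omega) fun j hj hj' => hm j hj (by omega)
      have a2 := hstep l hl m (hm l hkl (by omega)) (hm (l + 1) (by omega) le_rfl)
      simpa using dvd_add a1 a2
  · have hd0 : dNat s' t' 0 = 0 := by
      have := dNat_cases s' t' 0 h2'
      omega
    have hG0 : G 0 = X ^ 2 * H 0 := by rw [hG]; simp [hd0]
    have hn : n - 1 < n := by omega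
    have a1 := h.sq_smul_mem (1, H 0)
    rw [Prod.smul_mk, hmem _ hn] at a1
    have a1 := a1.2
    simp only [smul_eq_mul, mul_one] at a1
    rw [← mul_sub, ← hG0] at a1
    have a1 := X_pow_dvd_of_dvd_mul a1
    obtain ⟨u', hu'⟩ := h.exists_smul _ (hH (n - 1) hn)
    have a2 : H (n - 1) = X * u'.2 := congrArg Prod.snd hu'
    have a3 : X ^ (2 - dNat s' t' (n - 1) + 1) ∣ G (n - 1) := by
      rw [hG, pow_succ]
      exact mul_dvd_mul_left _ (a2 ▸ Dvd.intro _ rfl)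
    have a4 : X ^ 2 ∣ G 0 := hG0 ▸ Dvd.intro _ rfl
    have := dNat_cases s t (n - 1) h2
    have := dNat_cases s' t' (n - 1) h2'
    by_cases hc : dNat s t (n - 1) = 2 ∧ dNat s' t' (n - 1) = 2
    · exact (pow_dvd_pow _ (by omega)).trans a1
    · exact dvd_sub ((pow_dvd_pow _ (by omega)).trans a4) ((pow_dvd_pow _ (by omega)).trans a3)

/-- Congruence of slopes along the arc through the endpoints. -/
lemma IsSlope.dvd_sub_wrap {n s t s' t' : ℕ} {L : ℕ → Submodule K[X] (K[X] × K[X])}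
    {G : ℕ → K[X]} (h : IsSlope n s t s' t' L G) (h0 : 2 + dNat s t 0 - dNat s' t' 0 = 2)
    {k l m : ℕ} (hk : k < n) (hl : l < n)
    (hm : ∀ j, j < n → j ≤ k ∨ l ≤ j → m ≤ 2 + dNat s t j - dNat s' t' j) :
    X ^ m ∣ G k - G l := by
  have a1 := h.dvd_sub 0 k m (by omega) hk fun j _ hj => hm j (by omega) (Or.inl hj)
  have a2 := h.dvd_sub l (n - 1) m (by omega) (by omega) fun j hj hj' =>
    hm j (by omega) (Or.inr hj)
  have a3 : X ^ m ∣ G 0 - G (n - 1) := by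
    refine (pow_dvd_pow _ (le_min ?_ (hm _ (by omega) (Or.inr (by omega))))).trans h.dvd_sub_last
    have := hm 0 (by omega) (Or.inl (by omega))
    omega
  have := _root_.dvd_sub (_root_.dvd_sub a3 a1) a2
  convert this using 1
  ring

/-- A common slope splits the extension. -/
lemma IsSlope.exists_split {n s t s' t' : ℕ} {L : ℕ → Submodule K[X] (K[X] × K[X])}
    {G : ℕ → K[X]} (h : IsSlope n s t s' t' L G) (c : K[X])
    (hc : ∀ k < n, X ^ (2 + dNat s t k - dNat s' t' k) ∣ G k - X ^ 2 * c) :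
    ∃ c : K[X], ∀ k < n, (X ^ dNat s' t' k : K[X]) • ((1, c) : K[X] × K[X]) ∈ L k := by
  refine ⟨c, fun k hk => ?_⟩
  rw [Prod.smul_mk, h.mem_iff k hk _ (hc k hk)]
  simp only [smul_eq_mul, mul_one, dvd_refl, true_and]
  ring_nf
  exact dvd_zero _

/-- The change of basis of `K[X] × K[X]` with rows `(1, c)` and `(r, r * c + C u)`. -/
def pairEquiv (c r : K[X]) (u : K) (hu : u ≠ 0) : (K[X] × K[X]) ≃ₗ[K[X]] (K[X] × K[X]) where
  toFun x := (x.1 + r * x.2, (x.1 + r * x.2) * c + C u * x.2)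
  invFun y := (y.1 - r * (C u⁻¹ * (y.2 - y.1 * c)), C u⁻¹ * (y.2 - y.1 * c))
  map_add' x y := by ext1 <;> simp <;> ring
  map_smul' a x := by ext1 <;> simp <;> ring
  left_inv x := by
    have : (C u⁻¹ : K[X]) * C u = 1 := by rw [← C_mul, inv_mul_cancel₀ hu, C_1]
    ext1
    · simp only
      linear_combination (-r * x.2) * this
    · simp only
      linear_combination (x.2) * this
  right_inv y := by
    have : (C u⁻¹ : K[X]) * C u = 1 := by rw [← C_mul, inv_mul_cancel₀ hu, C_1]
    ext1
    · simp only
      ring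
    · simp only
      linear_combination (y.2 - y.1 * c) * this

/-- Two separated peaks of the difference of the exponents force the indices to cross. -/
lemma crossing_of_two_peaks {s t s' t' k k0 j1 j2 : ℕ} (h : s < t) (h' : s' < t')
    (hk : 2 + dNat s t k - dNat s' t' k ≤ 2 + dNat s t k0 - dNat s' t' k0)
    (hpos : (k < j1 ∧ j1 < k0 ∧ (j2 < k ∨ k0 < j2)) ∨ (k0 < j1 ∧ j1 < k ∧ (j2 < k0 ∨ k < j2)))
    (hj1 : 2 + dNat s t j1 - dNat s' t' j1 < 2 + dNat s t k - dNat s' t' k)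
    (hj2 : 2 + dNat s t j2 - dNat s' t' j2 < 2 + dNat s t k - dNat s' t' k) :
    (s < s' ∧ s' < t ∧ t < t') ∨ (s' < s ∧ s < t' ∧ t' < t) := by
  have up : ∀ x y, x < y → 2 + dNat s t x - dNat s' t' x < 2 + dNat s t y - dNat s' t' y →
      (x < s ∧ s ≤ y) ∨ (x < t ∧ t ≤ y) := by
    intro x y _ _
    have := dNat_cases s t x h
    have := dNat_cases s t y h
    have := dNat_cases s' t' x h'
    have := dNat_cases s' t' y h'
    omega
  have down : ∀ x y, x < y → 2 + dNat s t y - dNat s' t' y < 2 + dNat s t x - dNat s' t' x →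
      (x < s' ∧ s' ≤ y) ∨ (x < t' ∧ t' ≤ y) := by
    intro x y _ _
    have := dNat_cases s t x h
    have := dNat_cases s t y h
    have := dNat_cases s' t' x h'
    have := dNat_cases s' t' y h'
    omega
  have a0 := dNat_cases s t k h
  have a0' := dNat_cases s' t' k h'
  have a1 := dNat_cases s t k0 h
  have a1' := dNat_cases s' t' k0 h'
  have a2 := dNat_cases s t j2 h
  have a2' := dNat_cases s' t' j2 h'
  rcases hpos with ⟨p1, p2, p3 | p3⟩ | ⟨p1, p2, p3 | p3⟩
  · rcases up j2 k p3 hj2 with u1 | u1 <;> rcases up j1 k0 p2 (by omega) with u2 | u2 <;>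
      rcases down k j1 p1 hj1 with u3 | u3 <;> (try omega)
  · rcases up j1 k0 p2 (by omega) with u2 | u2 <;>
      rcases down k j1 p1 hj1 with u3 | u3 <;>
      rcases down k0 j2 p3 (by omega) with u1 | u1 <;> (try omega)
  · rcases up j1 k p2 hj1 with u2 | u2 <;>
      rcases down k0 j1 p1 (by omega) with u3 | u3 <;>
      rcases up j2 k0 p3 (by omega) with u1 | u1 <;> (try omega)
  · rcases up j1 k p2 hj1 with u2 | u2 <;>
      rcases down k0 j1 p1 (by omega) with u3 | u3 <;>
      rcases down k j2 p3 hj2 with u1 | u1 <;> (try omega)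

/-- An extension chain splits or is the middle term of one of the two crossing types. -/
lemma ExtChain.split_or_crossing {n s t s' t' : ℕ} {L : ℕ → Submodule K[X] (K[X] × K[X])}
    (h : ExtChain n s t s' t' L) :
    (∃ c : K[X], ∀ k < n, (X ^ dNat s' t' k : K[X]) • ((1, c) : K[X] × K[X]) ∈ L k) ∨
    (s < s' ∧ s' < t ∧ t < t' ∧ ∃ σ : (K[X] × K[X]) ≃ₗ[K[X]] (K[X] × K[X]), ∀ k < n, ∀ p q,
      σ (p, q) ∈ L k ↔ X ^ dNat s' t k ∣ p ∧ X ^ dNat s t' k ∣ q) ∨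
    (s' < s ∧ s < t' ∧ t' < t ∧ ∃ σ : (K[X] × K[X]) ≃ₗ[K[X]] (K[X] × K[X]), ∀ k < n, ∀ p q,
      σ (p, q) ∈ L k ↔ X ^ dNat s' s k ∣ p ∧ X ^ dNat t' t k ∣ q) := by
  obtain ⟨G, hG⟩ := h.exists_isSlope
  have h1 := h.one_le
  have h2 := h.lt
  have h3 := h.le
  have h1' := h.one_le'
  have h2' := h.lt'
  have h3' := h.le'
  have hd := fun k => dNat_cases s t k h2
  have hd' := fun k => dNat_cases s' t' k h2'
  have hD0 : 2 + dNat s t 0 - dNat s' t' 0 = 2 := by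
    have := hd 0
    have := hd' 0
    omega
  have hn : 0 < n := by omega
  have hu_dvd : ∀ {u : K} (_ : u ≠ 0) (m : ℕ) (q : K[X]), X ^ m ∣ C u * q ↔ X ^ m ∣ q :=
    fun hu m q => (isUnit_C.2 (isUnit_iff_ne_zero.2 hu)).dvd_mul_left
  by_cases hcr : (s < s' ∧ s' < t ∧ t < t') ∨ (s' < s ∧ s < t' ∧ t' < t)
  · rcases hcr with ⟨c1, c2, c3⟩ | ⟨c1, c2, c3⟩
    · have hsq : X ^ 2 ∣ G s := by
        have := hG.dvd_sub 0 s 2 (by omega) (by omega) fun j _ hj => by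
          have := hd j
          have := hd' j
          omega
        exact (dvd_sub_right hG.sq_dvd).1 this
      obtain ⟨c, hc⟩ := hsq
      have hout : ∀ k < n, (k < t ∨ t' ≤ k) →
          X ^ (2 + dNat s t k - dNat s' t' k) ∣ G k - X ^ 2 * c := by
        intro k hk hk'
        rw [← hc]
        rcases hk' with hk' | hk'
        · rcases le_total k s with hks | hks
          · refine hG.dvd_sub k s _ hks (by omega) fun j hj hj' => ?_
            have := hd j
            have := hd' j
            have := hd k
            have := hd' k
            omega
          · rw [dvd_sub_comm]
            refine hG.dvd_sub s k _ hks (by omega) fun j hj hj' => ?_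
            have := hd j
            have := hd' j
            have := hd k
            have := hd' k
            omega
        · rw [dvd_sub_comm]
          refine hG.dvd_sub_wrap hD0 (by omega) hk fun j hj hj' => ?_
          have := hd j
          have := hd' j
          have := hd k
          have := hd' k
          omega
      have hin : ∀ k < n, t ≤ k → k < t' → X ^ 3 ∣ G k - G t := by
        intro k hk hk1 hk2
        rw [dvd_sub_comm]
        refine hG.dvd_sub t k _ hk1 hk fun j hj hj' => ?_
        have := hd j
        have := hd' j
        omega
      obtain ⟨u, hu⟩ : X ^ 2 ∣ G t - X ^ 2 * c := by
        rw [← hc, dvd_sub_comm]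
        refine hG.dvd_sub s t _ (by omega) (by omega) fun j hj hj' => ?_
        have := hd j
        have := hd' j
        omega
      by_cases hu0 : u.coeff 0 = 0
      · left
        refine hG.exists_split c fun k hk => ?_
        by_cases hk' : k < t ∨ t' ≤ k
        · exact hout k hk hk'
        · have a1 := hin k hk (by omega) (by omega)
          have a2 : X ^ 3 ∣ G t - X ^ 2 * c := by
            rw [hu, pow_succ]
            exact mul_dvd_mul_left _ (X_dvd_iff.2 hu0)
          have := hd k
          have := hd' k
          have e : 2 + dNat s t k - dNat s' t' k = 3 := by omega
          rw [e]
          simpa using dvd_add a1 a2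
      · right; left
        refine ⟨c1, c2, c3, pairEquiv c 1 (u.coeff 0) hu0, fun k hk p q => ?_⟩
        change (p + 1 * q, (p + 1 * q) * c + C (u.coeff 0) * q) ∈ L k ↔ _
        have := hd k
        have := hd' k
        have := dNat_cases s' t k (by omega)
        have := dNat_cases s t' k (by omega)
        by_cases hk' : k < t ∨ t' ≤ k
        · rw [hG.mem_iff k hk _ (hout k hk hk')]
          have e : X ^ 2 * ((p + 1 * q) * c + C (u.coeff 0) * q) - (p + 1 * q) * (X ^ 2 * c) =
              X ^ 2 * (C (u.coeff 0) * q) := by ring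
          rw [e, pow_add, mul_dvd_mul_iff_left (pow_ne_zero _ X_ne_zero), hu_dvd hu0, one_mul]
          by_cases hk0 : k < s'
          · have e1 : dNat s' t' k = 0 := by omega
            have e2 : dNat s' t k = 0 := by omega
            have e3 : dNat s t' k = dNat s t k := by omega
            simp [e1, e2, e3]
          · have e1 : dNat s' t' k = dNat s t k := by omega
            have e2 : dNat s' t k = dNat s t k := by omega
            have e3 : dNat s t' k = dNat s t k := by omega
            rw [e1, e2, e3]
            exact and_congr_left fun hq => dvd_add_left hq
        · have e4 : X ^ (2 + dNat s t k - dNat s' t' k) ∣ G k - X ^ 2 * (c + C (u.coeff 0)) := by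
            have e : 2 + dNat s t k - dNat s' t' k = 3 := by omega
            rw [e]
            have a1 := hin k hk (by omega) (by omega)
            have a2 : X ^ 3 ∣ X ^ 2 * (u - C (u.coeff 0)) := by
              rw [pow_succ]
              exact mul_dvd_mul_left _ (X_dvd_iff.2 (by simp))
            convert dvd_add a1 a2 using 1
            linear_combination hu
          rw [hG.mem_iff k hk _ e4]
          have e : X ^ 2 * ((p + 1 * q) * c + C (u.coeff 0) * q) -
              (p + 1 * q) * (X ^ 2 * (c + C (u.coeff 0))) =
              X ^ 2 * -(C (u.coeff 0) * p) := by ring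
          rw [e, pow_add, mul_dvd_mul_iff_left (pow_ne_zero _ X_ne_zero), dvd_neg, hu_dvd hu0,
            one_mul]
          have e1 : dNat s' t' k = 1 := by omega
          have e2 : dNat s' t k = 2 := by omega
          have e3 : dNat s t' k = 1 := by omega
          have e5 : dNat s t k = 2 := by omega
          rw [e1, e2, e3, e5, and_comm]
          exact and_congr_right fun hp =>
            dvd_add_right ((pow_dvd_pow X (by omega)).trans hp)
    · obtain ⟨c, hc⟩ := hG.sq_dvd
      have hout : ∀ k < n, (k < s ∨ t' ≤ k) →
          X ^ (2 + dNat s t k - dNat s' t' k) ∣ G k - X ^ 2 * c := by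
        intro k hk hk'
        rw [← hc, dvd_sub_comm]
        rcases hk' with hk' | hk'
        · refine hG.dvd_sub 0 k _ (by omega) (by omega) fun j hj hj' => ?_
          have := hd j
          have := hd' j
          have := hd k
          have := hd' k
          omega
        · refine hG.dvd_sub_wrap hD0 (by omega) hk fun j hj hj' => ?_
          have := hd j
          have := hd' j
          have := hd k
          have := hd' k
          omega
      have hin : ∀ k < n, s ≤ k → k < t' → X ^ 2 ∣ G k - G s := by
        intro k hk hk1 hk2
        rw [dvd_sub_comm]
        refine hG.dvd_sub s k _ hk1 hk fun j hj hj' => ?_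
        have := hd j
        have := hd' j
        omega
      obtain ⟨u, hu⟩ : X ∣ G s - X ^ 2 * c := by
        rw [← hc, dvd_sub_comm, ← pow_one X]
        refine hG.dvd_sub 0 s _ (by omega) (by omega) fun j hj hj' => ?_
        have := hd j
        have := hd' j
        omega
      by_cases hu0 : u.coeff 0 = 0
      · left
        refine hG.exists_split c fun k hk => ?_
        by_cases hk' : k < s ∨ t' ≤ k
        · exact hout k hk hk'
        · have a1 := hin k hk (by omega) (by omega)
          have a2 : X ^ 2 ∣ G s - X ^ 2 * c := by
            rw [hu, pow_two]
            exact mul_dvd_mul_left _ (X_dvd_iff.2 hu0)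
          have := hd k
          have := hd' k
          have e : 2 + dNat s t k - dNat s' t' k = 2 := by omega
          rw [e]
          simpa using dvd_add a1 a2
      · right; right
        refine ⟨c1, c2, c3, pairEquiv c X (u.coeff 0) hu0, fun k hk p q => ?_⟩
        change (p + X * q, (p + X * q) * c + C (u.coeff 0) * q) ∈ L k ↔ _
        have := hd k
        have := hd' k
        have := dNat_cases s' s k (by omega)
        have := dNat_cases t' t k (by omega)
        by_cases hk' : k < s ∨ t' ≤ k
        · rw [hG.mem_iff k hk _ (hout k hk hk')]
          have e : X ^ 2 * ((p + X * q) * c + C (u.coeff 0) * q) - (p + X * q) * (X ^ 2 * c) =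
              X ^ 2 * (C (u.coeff 0) * q) := by ring
          rw [e, pow_add, mul_dvd_mul_iff_left (pow_ne_zero _ X_ne_zero), hu_dvd hu0]
          have e1 : dNat s' t' k = dNat s' s k := by omega
          have e3 : dNat t' t k = dNat s t k := by omega
          have e5 : dNat s' s k ≤ dNat s t k + 1 := by omega
          rw [e1, e3]
          refine and_congr_left fun hq => dvd_add_left ?_
          refine (pow_dvd_pow X e5).trans ?_
          rw [pow_succ, mul_comm]
          exact mul_dvd_mul_left _ hq
        · have e4 : X ^ (2 + dNat s t k - dNat s' t' k) ∣
              G k - (X ^ 2 * c + X * C (u.coeff 0)) := by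
            have e : 2 + dNat s t k - dNat s' t' k = 2 := by omega
            rw [e]
            have a1 := hin k hk (by omega) (by omega)
            have a2 : X ^ 2 ∣ X * (u - C (u.coeff 0)) := by
              rw [pow_two]
              exact mul_dvd_mul_left _ (X_dvd_iff.2 (by simp))
            convert dvd_add a1 a2 using 1
            linear_combination hu
          rw [hG.mem_iff k hk _ e4]
          have e : X ^ 2 * ((p + X * q) * c + C (u.coeff 0) * q) -
              (p + X * q) * (X ^ 2 * c + X * C (u.coeff 0)) =
              X * -(C (u.coeff 0) * p) := by ring
          have e1 : dNat s' t' k = 1 := by omega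
          have e2 : dNat s' s k = 2 := by omega
          have e3 : dNat t' t k = 0 := by omega
          have e5 : dNat s t k = 1 := by omega
          rw [e, e1, e2, e3, e5, show 2 + 1 = 1 + 2 by rfl, pow_add, pow_one,
            mul_dvd_mul_iff_left X_ne_zero, dvd_neg, hu_dvd hu0, pow_zero,
            dvd_add_left (Dvd.intro _ rfl)]
          simp only [isUnit_one, IsUnit.dvd, and_true, and_iff_right_iff_imp]
          exact fun hp => (dvd_pow_self X two_ne_zero).trans hp
  · left
    obtain ⟨k0, hk0, hmax⟩ := Finset.exists_max_image (Finset.range n)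
      (fun k => 2 + dNat s t k - dNat s' t' k) ⟨0, by simpa using hn⟩
    rw [Finset.mem_range] at hk0
    have hall : ∀ k < n, X ^ (2 + dNat s t k - dNat s' t' k) ∣ G k - G k0 := by
      intro k hk
      have hkm := hmax k (Finset.mem_range.2 hk)
      by_contra hcon
      have : ∃ j1 j2, j1 < n ∧ j2 < n ∧
          ((k < j1 ∧ j1 < k0 ∧ (j2 < k ∨ k0 < j2)) ∨ (k0 < j1 ∧ j1 < k ∧ (j2 < k0 ∨ k < j2))) ∧
          2 + dNat s t j1 - dNat s' t' j1 < 2 + dNat s t k - dNat s' t' k ∧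
          2 + dNat s t j2 - dNat s' t' j2 < 2 + dNat s t k - dNat s' t' k := by
        rcases le_total k k0 with hle | hle
        · have b1 := mt (hG.dvd_sub k k0 _ hle hk0) hcon
          have b2 := mt (hG.dvd_sub_wrap hD0 hk hk0) hcon
          push Not at b1 b2
          obtain ⟨j1, x1, x2, x3⟩ := b1
          obtain ⟨j2, y1, y2, y3⟩ := b2
          refine ⟨j1, j2, by omega, y1, Or.inl ⟨?_, ?_, ?_⟩, x3, y3⟩
          · rcases x1.lt_or_eq with x | rfl
            · exact x
            · omega
          · rcases x2.lt_or_eq with x | rfl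
            · exact x
            · omega
          · rcases y2 with y2 | y2
            · rcases y2.lt_or_eq with x | rfl
              · exact Or.inl x
              · omega
            · rcases y2.lt_or_eq with x | rfl
              · exact Or.inr x
              · omega
        · rw [dvd_sub_comm] at hcon
          have b1 := mt (hG.dvd_sub k0 k _ hle hk) hcon
          have b2 := mt (hG.dvd_sub_wrap hD0 hk0 hk) hcon
          push Not at b1 b2
          obtain ⟨j1, x1, x2, x3⟩ := b1
          obtain ⟨j2, y1, y2, y3⟩ := b2
          refine ⟨j1, j2, by omega, y1, Or.inr ⟨?_, ?_, ?_⟩, x3, y3⟩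
          · rcases x1.lt_or_eq with x | rfl
            · exact x
            · omega
          · rcases x2.lt_or_eq with x | rfl
            · exact x
            · omega
          · rcases y2 with y2 | y2
            · rcases y2.lt_or_eq with x | rfl
              · exact Or.inl x
              · omega
            · rcases y2.lt_or_eq with x | rfl
              · exact Or.inr x
              · omega
      obtain ⟨j1, j2, -, -, hpos, x, y⟩ := this
      apply hcr
      exact crossing_of_two_peaks h2 h2' hkm hpos x y
    have hsq : X ^ 2 ∣ G k0 := by
      have := hall 0 hn
      rw [hD0] at this
      exact (dvd_sub_right hG.sq_dvd).1 this
    obtain ⟨c, hc⟩ := hsq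
    exact hG.exists_split c fun k hk => hc ▸ hall k hk

end Chains

section Models

variable {K : Type} [Field K] {n : ℕ}
  {Λ : Subalgebra K[X] (Matrix (Fin n) (Fin n) (RatFunc K))}

lemma xPow_mono {c d : ℤ} (h : c ≤ d) (p : K[X]) :
    RatFunc.X ^ d * algebraMap K[X] (RatFunc K) p ∈ xPow K c := by
  obtain ⟨e, rfl⟩ := Int.le.dest h
  refine ⟨X ^ e * p, ?_⟩
  rw [zpow_add₀ RatFunc.X_ne_zero, map_mul, map_pow, RatFunc.algebraMap_X, zpow_natCast, mul_assoc]

lemma neg_one_le_cExp (i j : Fin n) : -1 ≤ cExp n i j := by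
  unfold cExp; split_ifs <;> omega

lemma cExp_self_le (k : Fin n) : cExp n k k ≤ 0 := by
  unfold cExp; split_ifs <;> omega

lemma cExp_le_two (i j : Fin n) : cExp n i j ≤ 2 := by
  unfold cExp; split_ifs <;> omega

/-- The elementary matrix `X ^ m • E i j` as an element of `Λ`. -/
def unitΛ (hΛ : (Λ : Set (Matrix (Fin n) (Fin n) (RatFunc K))) = lambdaCarrier K n)
    (i j : Fin n) (m : ℤ) (h : cExp n i j ≤ m) : Λ :=
  ⟨Matrix.single i j (RatFunc.X ^ m), by
    rw [← SetLike.mem_coe, hΛ]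
    intro a b
    by_cases hab : i = a ∧ j = b
    · obtain ⟨rfl, rfl⟩ := hab
      simpa using xPow_mono h (1 : K[X])
    · rw [Matrix.single_apply_of_ne _ _ _ _ _ hab]
      exact ⟨0, by simp⟩⟩

lemma exists_X_mul_eq (hΛ : (Λ : Set (Matrix (Fin n) (Fin n) (RatFunc K))) = lambdaCarrier K n)
    (l : Λ) : ∃ q : Fin n → Fin n → K[X], ∀ k j,
      algebraMap K[X] (RatFunc K) (q k j) = RatFunc.X * l.1 k j := by
  have hl : l.1 ∈ lambdaCarrier K n := hΛ ▸ l.2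
  have : ∀ k j, ∃ p : K[X], algebraMap K[X] (RatFunc K) p = RatFunc.X * l.1 k j := by
    intro k j
    obtain ⟨p, hp⟩ := hl k j
    obtain ⟨e, he⟩ := Int.le.dest (neg_one_le_cExp k j)
    refine ⟨X ^ e * p, ?_⟩
    rw [hp, ← he, zpow_add₀ RatFunc.X_ne_zero, map_mul, map_pow, RatFunc.algebraMap_X,
      zpow_natCast, _root_.zpow_neg_one]
    field_simp [RatFunc.X_ne_zero]
  choose q hq using this
  exact ⟨q, hq⟩

/-- A description of a `Λ`-module `M` as the product of the submodules `L k` of a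
`K[X]`-module `V`, with `Λ` acting by (rescaled) matrix multiplication. -/
structure IsModel (Λ : Subalgebra K[X] (Matrix (Fin n) (Fin n) (RatFunc K)))
    (M : Type*) [AddCommGroup M] [Module Λ M] (V : Type*) [AddCommGroup V] [Module K[X] V]
    (L : ℕ → Submodule K[X] V) (π : Fin n → M → V) : Prop where
  add : ∀ k m m', π k (m + m') = π k m + π k m'
  smul : ∀ (l : Λ) (m : M) (k : Fin n) (q : Fin n → K[X]),
    (∀ j, algebraMap K[X] (RatFunc K) (q j) = RatFunc.X * l.1 k j) →
      (X : K[X]) • π k (l • m) = ∑ j, q j • π j m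
  inj : ∀ m m', (∀ k, π k m = π k m') → m = m'
  mem : ∀ (k : Fin n) m, π k m ∈ L k
  surj : ∀ u : Fin n → V, (∀ k : Fin n, u k ∈ L k) → ∃ m, ∀ k, π k m = u k

section

variable {M : Type*} [AddCommGroup M] [Module Λ M] {V : Type*} [AddCommGroup V] [Module K[X] V]
  {L : ℕ → Submodule K[X] V} {π : Fin n → M → V}
  {N : Type*} [AddCommGroup N] [Module Λ N] {W : Type*} [AddCommGroup W] [Module K[X] W]
  {L' : ℕ → Submodule K[X] W} {π' : Fin n → N → W}

lemma IsModel.exists_hom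
    (hΛ : (Λ : Set (Matrix (Fin n) (Fin n) (RatFunc K))) = lambdaCarrier K n)
    (hM : IsModel Λ M V L π) (hN : IsModel Λ N W L' π')
    (hW : ∀ w : W, (X : K[X]) • w = 0 → w = 0) (ψ : V →ₗ[K[X]] W)
    (hψ : ∀ k : Fin n, ∀ u ∈ L k, ψ u ∈ L' k) :
    ∃ Ψ : M →ₗ[Λ] N, ∀ k m, π' k (Ψ m) = ψ (π k m) := by
  choose F hF using fun m => hN.surj (fun k => ψ (π k m)) fun k => hψ k _ (hM.mem k m)
  refine ⟨⟨⟨F, fun m m' => hN.inj _ _ fun k => ?_⟩, fun l m => hN.inj _ _ fun k => ?_⟩,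
    fun k m => hF m k⟩
  · rw [hN.add, hF, hF, hF, hM.add, map_add]
  · obtain ⟨q, hq⟩ := exists_X_mul_eq hΛ l
    rw [← sub_eq_zero]
    apply hW
    simp only [RingHom.id_apply]
    rw [smul_sub, hF, hN.smul l (F m) k (q k) (hq k), ← map_smul, hM.smul l m k (q k) (hq k),
      map_sum]
    simp [hF]

lemma IsModel.nonempty_equiv
    (hΛ : (Λ : Set (Matrix (Fin n) (Fin n) (RatFunc K))) = lambdaCarrier K n)
    (hM : IsModel Λ M V L π) (hN : IsModel Λ N W L' π')
    (hW : ∀ w : W, (X : K[X]) • w = 0 → w = 0) (θ : V ≃ₗ[K[X]] W)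
    (hθ : ∀ k < n, ∀ u, θ u ∈ L' k ↔ u ∈ L k) : Nonempty (M ≃ₗ[Λ] N) := by
  have hV : ∀ v : V, (X : K[X]) • v = 0 → v = 0 := fun v hv => by
    have := hW (θ v) (by rw [← map_smul, hv, map_zero])
    simpa using this
  obtain ⟨Ψ, h1⟩ := hM.exists_hom hΛ hN hW θ.toLinearMap fun k u hu => (hθ k k.2 u).2 hu
  obtain ⟨Φ, h2⟩ := hN.exists_hom hΛ hM hV θ.symm.toLinearMap fun k u hu => by
    rw [← hθ k k.2]
    simpa using hu
  refine ⟨LinearEquiv.ofLinearMap Ψ Φ ?_ ?_⟩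
  · ext m
    exact hN.inj _ _ fun k => by simp [h1, h2]
  · ext m
    exact hM.inj _ _ fun k => by simp [h1, h2]

lemma IsModel.prod (hM : IsModel Λ M V L π) (hN : IsModel Λ N W L' π') :
    IsModel Λ (M × N) (V × W) (fun k => (L k).prod (L' k)) (fun k m => (π k m.1, π' k m.2)) where
  add k m m' := by simp [hM.add, hN.add]
  smul l m k q hq := by
    simp [hM.smul l m.1 k q hq, hN.smul l m.2 k q hq, Prod.ext_iff, Prod.fst_sum, Prod.snd_sum]
  inj m m' h := Prod.ext (hM.inj _ _ fun k => congrArg Prod.fst (h k))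
    (hN.inj _ _ fun k => congrArg Prod.snd (h k))
  mem k m := ⟨hM.mem k _, hN.mem k _⟩
  surj u hu := by
    obtain ⟨m, hm⟩ := hM.surj (fun k => (u k).1) fun k => (hu k).1
    obtain ⟨m', hm'⟩ := hN.surj (fun k => (u k).2) fun k => (hu k).2
    exact ⟨(m, m'), fun k => Prod.ext (hm k) (hm' k)⟩

end

/-- The submodules of `K[X]` describing the module `(i, j)`. -/
def rankOne (K : Type) [Field K] (i j k : ℕ) : Submodule K[X] K[X] :=
  Submodule.span K[X] {X ^ dNat i j k}

lemma mem_rankOne {i j k : ℕ} {p : K[X]} : p ∈ rankOne K i j k ↔ X ^ dNat i j k ∣ p :=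
  Ideal.mem_span_singleton

lemma exists_isModel_of_eq_ijSet {i j : ℕ} (E : Submodule Λ (Fin n → RatFunc K))
    (hE : (E : Set (Fin n → RatFunc K)) = ijSet K n i j) :
    ∃ π : Fin n → E → K[X], IsModel Λ E K[X] (rankOne K i j) π := by
  have hex : ∀ (k : Fin n) (m : E), ∃ p : K[X], X ^ dNat i j k ∣ p ∧
      algebraMap K[X] (RatFunc K) p = m.1 k := by
    intro k m
    have hm : m.1 ∈ ijSet K n i j := hE ▸ m.2
    obtain ⟨p, hp⟩ := hm k
    refine ⟨X ^ dNat i j k * p, Dvd.intro _ rfl, ?_⟩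
    rw [hp, dExp_eq_dNat, zpow_natCast, map_mul, map_pow, RatFunc.algebraMap_X]
  choose π hπ hπ' using hex
  have hinj := RatFunc.algebraMap_injective K
  refine ⟨π, ⟨?_, ?_, ?_, ?_, ?_⟩⟩
  · intro k m m'
    apply hinj
    rw [map_add, hπ', hπ', hπ']
    rfl
  · intro l m k q hq
    apply hinj
    simp only [smul_eq_mul, map_mul, map_sum, hπ', hq, RatFunc.algebraMap_X, mul_assoc]
    rw [← Finset.mul_sum]
    rfl
  · intro m m' h
    ext k
    rw [← hπ', ← hπ', h]
  · intro k m
    exact mem_rankOne.2 (hπ k m)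
  · intro u hu
    refine ⟨⟨fun k => algebraMap K[X] (RatFunc K) (u k), ?_⟩, fun k => ?_⟩
    · rw [← SetLike.mem_coe, hE]
      intro k
      obtain ⟨p, hp⟩ := mem_rankOne.1 (hu k)
      refine ⟨p, ?_⟩
      change algebraMap K[X] (RatFunc K) (u k) = _
      rw [hp, dExp_eq_dNat, zpow_natCast, map_mul, map_pow, RatFunc.algebraMap_X]
    · apply hinj
      rw [hπ']

section Units

variable (hΛ : (Λ : Set (Matrix (Fin n) (Fin n) (RatFunc K))) = lambdaCarrier K n)

lemma unitΛ_mul_unitΛ {i j k : Fin n} {a b c : ℤ} (ha : cExp n i j ≤ a) (hb : cExp n j k ≤ b)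
    (hc : cExp n i k ≤ c) (habc : c = a + b) :
    unitΛ hΛ i j a ha * unitΛ hΛ j k b hb = unitΛ hΛ i k c hc := by
  apply Subtype.ext
  change Matrix.single i j _ * Matrix.single j k _ = Matrix.single i k _
  rw [Matrix.single_mul_single_same, habc, zpow_add₀ RatFunc.X_ne_zero]

lemma X_pow_smul_unitΛ {i j : Fin n} (e : ℕ) {a b : ℤ} (ha : cExp n i j ≤ a)
    (hb : cExp n i j ≤ b) (hab : b = e + a) :
    (X ^ e : K[X]) • unitΛ hΛ i j a ha = unitΛ hΛ i j b hb := by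
  apply Subtype.ext
  change (X ^ e : K[X]) • Matrix.single i j _ = Matrix.single i j _
  rw [Matrix.smul_single, hab, zpow_add₀ RatFunc.X_ne_zero, Algebra.smul_def, map_pow,
    RatFunc.algebraMap_X, zpow_natCast]

lemma smul_poly_smul {M : Type*} [AddCommGroup M] [Module Λ M] [Module K[X] M]
    [IsScalarTower K[X] Λ M] (l : Λ) (p : K[X]) (m : M) : l • p • m = p • l • m := by
  rw [← algebraMap_smul Λ p m, smul_smul, ← Algebra.commutes, mul_smul, algebraMap_smul]

lemma map_poly_smul {M N : Type*} [AddCommGroup M] [Module Λ M] [Module K[X] M]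
    [IsScalarTower K[X] Λ M] [AddCommGroup N] [Module Λ N] [Module K[X] N]
    [IsScalarTower K[X] Λ N] (f : M →ₗ[Λ] N) (p : K[X]) (m : M) : f (p • m) = p • f m := by
  rw [← algebraMap_smul Λ p m, map_smul, algebraMap_smul]

lemma sum_unitΛ_smul {M : Type*} [AddCommGroup M] [Module Λ M] (m : M) :
    ∑ k, unitΛ hΛ k k 0 (cExp_self_le k) • m = m := by
  rw [← Finset.sum_smul]
  have : ∑ k, unitΛ hΛ k k 0 (cExp_self_le k) = 1 := by
    apply Subtype.ext
    rw [AddSubmonoidClass.coe_finsetSum]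
    change ∑ k, Matrix.single k k _ = (1 : Matrix (Fin n) (Fin n) (RatFunc K))
    simp only [zpow_zero]
    exact Matrix.sum_single_one
  rw [this, one_smul]

end Units

section Rows

variable [NeZero n]

lemma cExp_zero_le (k : Fin n) : cExp n 0 k ≤ 0 := by
  unfold cExp
  simp only [Fin.val_zero]
  split_ifs <;> omega

variable (hΛ : (Λ : Set (Matrix (Fin n) (Fin n) (RatFunc K))) = lambdaCarrier K n)
  (M : Type*) [AddCommGroup M] [Module Λ M] [Module K[X] M] [IsScalarTower K[X] Λ M]

/-- The matrix unit `E 0 k` in `Λ`. -/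
def rowUnit (k : Fin n) : Λ := unitΛ hΛ 0 k 0 (cExp_zero_le k)

/-- The action of `E 0 k` on `M`. -/
def rowMap (k : Fin n) : M →ₗ[K[X]] M where
  toFun m := rowUnit hΛ k • m
  map_add' := smul_add _
  map_smul' p m := smul_poly_smul _ p m

lemma rowMap_apply (k : Fin n) (m : M) : rowMap hΛ M k m = rowUnit hΛ k • m := rfl

/-- The `K[X]`-module `E 0 0 • M`. -/
def rowSpace : Submodule K[X] M := LinearMap.range (rowMap hΛ M 0)

/-- The submodules `E 0 k • M` of `E 0 0 • M`. -/
def rowLat (k : ℕ) : Submodule K[X] (rowSpace hΛ M) :=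
  if h : k < n then (LinearMap.range (rowMap hΛ M ⟨k, h⟩)).comap (rowSpace hΛ M).subtype else ⊥

variable {M}

lemma mem_rowLat {k : ℕ} (hk : k < n) {u : rowSpace hΛ M} :
    u ∈ rowLat hΛ M k ↔ ∃ m : M, rowUnit hΛ ⟨k, hk⟩ • m = u := by
  rw [rowLat, dif_pos hk]
  rfl

lemma rowUnit_zero_mul (k : Fin n) : rowUnit hΛ 0 * rowUnit hΛ k = rowUnit hΛ k :=
  unitΛ_mul_unitΛ hΛ _ _ _ rfl

lemma rowUnit_smul_mem (k : Fin n) (m : M) : rowUnit hΛ k • m ∈ rowSpace hΛ M :=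
  ⟨rowUnit hΛ k • m, by
    change rowUnit hΛ 0 • rowUnit hΛ k • m = _
    rw [smul_smul, rowUnit_zero_mul]⟩

lemma rowUnit_zero_smul (u : rowSpace hΛ M) : rowUnit hΛ 0 • u.1 = u.1 := by
  obtain ⟨m, hm⟩ := u.2
  rw [← hm]
  change rowUnit hΛ 0 • rowUnit hΛ 0 • m = rowUnit hΛ 0 • m
  rw [smul_smul, rowUnit_zero_mul]

/-- The projection of `M` to its `k`-th row. -/
def rowProj (k : Fin n) (m : M) : rowSpace hΛ M := ⟨rowUnit hΛ k • m, rowUnit_smul_mem hΛ k m⟩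

/-- The diagonal matrix unit factors, up to `X ^ 2`, through the row unit. -/
lemma X_sq_smul_eq (k : Fin n) (m : M) :
    (X ^ 2 : K[X]) • unitΛ hΛ k k 0 (cExp_self_le k) • m =
      unitΛ hΛ k 0 2 (cExp_le_two k 0) • rowUnit hΛ k • m := by
  rw [smul_smul, rowUnit, unitΛ_mul_unitΛ hΛ (c := 2) _ _ (cExp_le_two k k) rfl, ← smul_assoc,
    X_pow_smul_unitΛ hΛ 2 _ (cExp_le_two k k) rfl]

lemma isModel_row (hX : ∀ m : M, (X : K[X]) • m = 0 → m = 0) :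
    IsModel Λ M (rowSpace hΛ M) (rowLat hΛ M) (rowProj hΛ) where
  add k m m' := Subtype.ext (smul_add _ _ _)
  smul l m k q hq := by
    apply Subtype.ext
    simp only [Submodule.coe_smul, AddSubmonoidClass.coe_finsetSum, rowProj]
    simp only [← smul_assoc, ← Finset.sum_smul]
    congr 1
    apply Subtype.ext
    rw [AddSubmonoidClass.coe_finsetSum]
    change ((X : K[X]) • Matrix.single 0 k (RatFunc.X ^ (0 : ℤ))) * l.1 =
      ∑ j, q j • Matrix.single 0 j (RatFunc.X ^ (0 : ℤ))
    simp only [Matrix.smul_single]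
    simp only [Algebra.smul_def, RatFunc.algebraMap_X, zpow_zero, mul_one, hq]
    ext a b
    rw [Matrix.sum_apply]
    by_cases ha : a = 0
    · subst ha
      simp [Matrix.single_apply]
    · rw [Matrix.single_mul_apply_of_ne _ _ _ _ _ ha]
      simp [Ne.symm ha]
  inj m m' h := by
    have hX2 : ∀ m : M, (X ^ 2 : K[X]) • m = 0 → m = 0 := fun m hm => by
      rw [pow_two, mul_smul] at hm
      exact hX _ (hX _ hm)
    rw [← sub_eq_zero]
    apply hX2
    rw [← sum_unitΛ_smul hΛ (m - m'), Finset.smul_sum]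
    refine Finset.sum_eq_zero fun k _ => ?_
    have hk : rowUnit hΛ k • m = rowUnit hΛ k • m' := congrArg Subtype.val (h k)
    rw [X_sq_smul_eq hΛ, smul_sub, hk, sub_self, smul_zero]
  mem k m := (mem_rowLat hΛ k.2).2 ⟨m, rfl⟩
  surj u hu := by
    choose m hm using fun k : Fin n => (mem_rowLat hΛ k.2).1 (hu k)
    refine ⟨∑ k, unitΛ hΛ k k 0 (cExp_self_le k) • m k, fun k => Subtype.ext ?_⟩
    change rowUnit hΛ k • _ = (u k).1
    rw [Finset.smul_sum, Finset.sum_eq_single k, ← hm k, smul_smul, rowUnit,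
      unitΛ_mul_unitΛ hΛ (c := 0) _ _ (cExp_zero_le k) rfl]
    · intro j _ hjk
      rw [smul_smul]
      have : rowUnit hΛ k * unitΛ hΛ j j 0 (cExp_self_le j) = 0 := by
        apply Subtype.ext
        change Matrix.single 0 k _ * Matrix.single j j _ = 0
        rw [Matrix.single_mul_single_of_ne _ _ _ _ (Ne.symm hjk)]
      rw [this, zero_smul]
    · simp

lemma rowChain (hn : 3 ≤ n) : RowChain n (rowLat hΛ M) where
  zero := by
    rw [eq_top_iff]
    rintro u -
    rw [mem_rowLat hΛ (by omega)]
    exact ⟨u.1, rowUnit_zero_smul hΛ u⟩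
  succ_le k hk u hu := by
    rw [mem_rowLat hΛ hk] at hu
    rw [mem_rowLat hΛ (by omega)]
    obtain ⟨m, hm⟩ := hu
    have hc : cExp n ⟨k, by omega⟩ ⟨k + 1, hk⟩ ≤ 0 := by
      unfold cExp; simp only; split_ifs <;> omega
    refine ⟨unitΛ hΛ ⟨k, by omega⟩ ⟨k + 1, hk⟩ 0 hc • m, ?_⟩
    rw [← hm, smul_smul, rowUnit, unitΛ_mul_unitΛ hΛ _ _ (cExp_zero_le _) (by rfl)]
    rfl
  smul_mem k hk u hu := by
    rw [mem_rowLat hΛ (by omega)] at hu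
    rw [mem_rowLat hΛ hk]
    obtain ⟨m, hm⟩ := hu
    have hc : cExp n ⟨k + 1, hk⟩ ⟨k, by omega⟩ ≤ 1 := by
      unfold cExp; simp only; split_ifs <;> omega
    refine ⟨unitΛ hΛ ⟨k + 1, hk⟩ ⟨k, by omega⟩ 1 hc • m, ?_⟩
    have h1 : cExp n 0 ⟨k, by omega⟩ ≤ 1 := (cExp_zero_le _).trans zero_le_one
    rw [Submodule.coe_smul, ← hm, smul_smul, rowUnit, unitΛ_mul_unitΛ hΛ _ _ h1 (by rfl),
      ← smul_assoc, ← pow_one (X : K[X]), rowUnit, X_pow_smul_unitΛ hΛ 1 _ h1 (by rfl)]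
  exists_smul u hu := by
    rw [mem_rowLat hΛ (by omega)] at hu
    obtain ⟨m, hm⟩ := hu
    have hc : cExp n 0 ⟨n - 1, by omega⟩ ≤ -1 := by
      simp [cExp]
    refine ⟨⟨unitΛ hΛ 0 ⟨n - 1, by omega⟩ (-1) hc • m,
      unitΛ hΛ 0 ⟨n - 1, by omega⟩ (-1) hc • m, ?_⟩, Subtype.ext ?_⟩
    · rw [rowMap_apply, smul_smul, rowUnit, unitΛ_mul_unitΛ hΛ _ _ hc (by rfl)]
    · rw [Submodule.coe_smul, ← hm, ← smul_assoc, ← pow_one (X : K[X]), rowUnit,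
        X_pow_smul_unitΛ hΛ 1 _ (cExp_zero_le _) (by rfl)]
  sq_smul_mem u := by
    rw [mem_rowLat hΛ (by omega)]
    refine ⟨unitΛ hΛ ⟨n - 1, by omega⟩ 0 2 (cExp_le_two _ _) • u.1, ?_⟩
    rw [Submodule.coe_smul, smul_smul, rowUnit, unitΛ_mul_unitΛ hΛ _ _ (cExp_le_two _ _) (by rfl)]
    conv_rhs => rw [← rowUnit_zero_smul hΛ u]
    rw [← smul_assoc, rowUnit, X_pow_smul_unitΛ hΛ 2 _ (cExp_le_two _ _) (by rfl)]

/-- An indecomposable lattice is described by a rank one chain. -/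
lemma exists_coord (hn : 3 ≤ n) [Module.Finite K[X] M] [NoZeroSMulDivisors K[X] M]
    (hind : Nontrivial M ∧ ¬ ∃ (Y Z : Submodule Λ M), IsCompl Y Z ∧ Y ≠ ⊥ ∧ Z ≠ ⊥) :
    ∃ (a b : ℕ) (θ : rowSpace hΛ M ≃ₗ[K[X]] K[X]), 1 ≤ a ∧ a < b ∧ b ≤ n ∧
      ∀ k < n, ∀ u, u ∈ rowLat hΛ M k ↔ X ^ dNat a b k ∣ θ u := by
  have hX : ∀ m : M, (X : K[X]) • m = 0 → m = 0 := fun m hm =>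
    (smul_eq_zero.1 hm).resolve_left X_ne_zero
  have hX' : ∀ u : rowSpace hΛ M, (X : K[X]) • u = 0 → u = 0 := fun u hu =>
    Subtype.ext (hX u.1 (congrArg Subtype.val hu))
  have hM := isModel_row hΛ hX
  have : Nontrivial M := hind.1
  have : Nontrivial (rowSpace hΛ M) := by
    by_contra hcon
    rw [not_nontrivial_iff_subsingleton] at hcon
    obtain ⟨m, m', hm⟩ := exists_pair_ne M
    exact hm (hM.inj m m' fun k => Subsingleton.elim _ _)
  have : Module.Free K[X] (rowSpace hΛ M) := inferInstance
  obtain ⟨a, b, v, φ, ha, hab, hb, hφv, hv, hφ⟩ := (rowChain hΛ (M := M) hn).exists_summand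
    (by omega)
  obtain ⟨P, hP⟩ := hM.exists_hom hΛ hM hX' (φ.smulRight v) fun k u hu => by
    obtain ⟨c, hc⟩ := hφ k k.2 u hu
    rw [LinearMap.smulRight_apply, hc, mul_comm, mul_smul]
    exact Submodule.smul_mem _ _ (hv k k.2)
  have hPP : ∀ m, P (P m) = P m := fun m => hM.inj _ _ fun k => by
    simp [hP, hφv]
  have hcompl : IsCompl (LinearMap.range P) (LinearMap.ker P) := by
    refine ⟨?_, ?_⟩
    · rw [Submodule.disjoint_def]
      rintro _ ⟨m, rfl⟩ hm
      rw [LinearMap.mem_ker, hPP] at hm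
      exact hm
    · rw [codisjoint_iff, Submodule.eq_top_iff']
      intro m
      rw [Submodule.mem_sup]
      exact ⟨P m, ⟨m, rfl⟩, m - P m, by rw [LinearMap.mem_ker, map_sub, hPP, sub_self], by abel⟩
  have hu0 : ∀ u : rowSpace hΛ M, rowProj hΛ 0 u.1 = u := fun u =>
    Subtype.ext (rowUnit_zero_smul hΛ u)
  have hrange : LinearMap.range P ≠ ⊥ := by
    intro hbot
    rw [LinearMap.range_eq_bot] at hbot
    have h1 := hP 0 v.1
    have h0 : rowProj hΛ 0 (0 : M) = 0 := Subtype.ext (smul_zero _)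
    rw [hbot, LinearMap.zero_apply, h0, hu0, LinearMap.smulRight_apply, hφv, one_smul] at h1
    rw [← h1, map_zero] at hφv
    exact zero_ne_one hφv
  have hker : LinearMap.ker P = ⊥ := by
    by_contra hker
    exact hind.2 ⟨_, _, hcompl, hrange, hker⟩
  have hPid : ∀ m, P m = m := fun m => LinearMap.ker_eq_bot.1 hker (hPP m)
  have hφu : ∀ u, φ u • v = u := fun u => by
    have := hP 0 u.1
    rw [hPid, hu0, LinearMap.smulRight_apply] at this
    exact this.symm
  refine ⟨a, b, LinearEquiv.ofLinearMap φ (LinearMap.toSpanSingleton K[X] _ v) ?_ ?_, ha, hab, hb,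
    fun k hk u => ⟨fun hu => hφ k hk u hu, fun hu => ?_⟩⟩
  · ext
    simp [hφv]
  · ext u
    simp [hφu]
  · obtain ⟨c, hc⟩ := hu
    have hc' : φ u = X ^ dNat a b k * c := hc
    rw [← hφu u, hc', mul_comm, mul_smul]
    exact Submodule.smul_mem _ _ (hv k hk)

lemma map_mem_rowSpace {N : Type*} [AddCommGroup N] [Module Λ N] [Module K[X] N]
    [IsScalarTower K[X] Λ N] (f : M →ₗ[Λ] N) (u : rowSpace hΛ M) : f u.1 ∈ rowSpace hΛ N :=
  ⟨f u.1, by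
    change rowUnit hΛ 0 • f u.1 = f u.1
    rw [← map_smul, rowUnit_zero_smul]⟩

/-- The map on row spaces induced by a `Λ`-linear map. -/
def rowMapHom {N : Type*} [AddCommGroup N] [Module Λ N] [Module K[X] N]
    [IsScalarTower K[X] Λ N] (f : M →ₗ[Λ] N) : rowSpace hΛ M →ₗ[K[X]] rowSpace hΛ N where
  toFun u := ⟨f u.1, map_mem_rowSpace hΛ f u⟩
  map_add' u v := Subtype.ext (map_add f u.1 v.1)
  map_smul' p u := Subtype.ext (map_poly_smul f p u.1)

lemma rowMapHom_rowProj {N : Type*} [AddCommGroup N] [Module Λ N] [Module K[X] N]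
    [IsScalarTower K[X] Λ N] (f : M →ₗ[Λ] N) (k : Fin n) (m : M) :
    rowMapHom hΛ f (rowProj hΛ k m) = rowProj hΛ k (f m) :=
  Subtype.ext (map_smul f (rowUnit hΛ k) m)

section Exact

variable {A B C : Type*} [AddCommGroup A] [Module Λ A] [Module K[X] A] [IsScalarTower K[X] Λ A]
  [AddCommGroup B] [Module Λ B] [Module K[X] B] [IsScalarTower K[X] Λ B]
  [AddCommGroup C] [Module Λ C] [Module K[X] C] [IsScalarTower K[X] Λ C]
  {f : A →ₗ[Λ] B} {g : B →ₗ[Λ] C}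

lemma mem_rowLat_iff_rowProj {k : ℕ} (hk : k < n) {u : rowSpace hΛ M} :
    u ∈ rowLat hΛ M k ↔ ∃ m : M, rowProj hΛ ⟨k, hk⟩ m = u := by
  rw [mem_rowLat hΛ hk]
  exact exists_congr fun m => (Subtype.ext_iff (a1 := rowProj hΛ _ m)).symm

/-- Taking the `k`-th row is exact in the middle. -/
lemma exists_rowMapHom_eq (hX : ∀ c : C, (X : K[X]) • c = 0 → c = 0)
    (hexact : LinearMap.range f = LinearMap.ker g) {k : ℕ} (hk : k < n) {u : rowSpace hΛ B}
    (hu : u ∈ rowLat hΛ B k) (hgu : rowMapHom hΛ g u = 0) :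
    ∃ v ∈ rowLat hΛ A k, rowMapHom hΛ f v = u := by
  obtain ⟨b, rfl⟩ := (mem_rowLat_iff_rowProj hΛ hk).1 hu
  set i : Fin n := ⟨k, hk⟩
  set e := unitΛ hΛ i i 0 (cExp_self_le i)
  have hgb : rowUnit hΛ i • g b = 0 := by
    rw [rowMapHom_rowProj] at hgu
    exact congrArg Subtype.val hgu
  have h0 : g (e • b) = 0 := by
    apply hX
    apply hX
    rw [smul_smul, ← pow_two, map_smul, X_sq_smul_eq, hgb, smul_zero]
  obtain ⟨a, ha⟩ : e • b ∈ LinearMap.range f := by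
    rw [hexact]
    exact h0
  refine ⟨rowProj hΛ i a, (mem_rowLat_iff_rowProj hΛ hk).2 ⟨a, rfl⟩, ?_⟩
  rw [rowMapHom_rowProj, ha]
  apply Subtype.ext
  change rowUnit hΛ i • e • b = rowUnit hΛ i • b
  rw [smul_smul, rowUnit, unitΛ_mul_unitΛ hΛ _ _ (cExp_zero_le i) rfl]

lemma rowMapHom_mem (f : A →ₗ[Λ] B) {k : ℕ} (hk : k < n) {u : rowSpace hΛ A}
    (hu : u ∈ rowLat hΛ A k) : rowMapHom hΛ f u ∈ rowLat hΛ B k := by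
  obtain ⟨a, rfl⟩ := (mem_rowLat_iff_rowProj hΛ hk).1 hu
  exact (mem_rowLat_iff_rowProj hΛ hk).2 ⟨f a, (rowMapHom_rowProj hΛ f _ a).symm⟩

lemma exists_rowMapHom_eq_of_surjective (hg : Function.Surjective g) {k : ℕ} (hk : k < n)
    {u : rowSpace hΛ C} (hu : u ∈ rowLat hΛ C k) :
    ∃ v ∈ rowLat hΛ B k, rowMapHom hΛ g v = u := by
  obtain ⟨c, rfl⟩ := (mem_rowLat_iff_rowProj hΛ hk).1 hu
  obtain ⟨b, rfl⟩ := hg c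
  exact ⟨rowProj hΛ _ b, (mem_rowLat_iff_rowProj hΛ hk).2 ⟨b, rfl⟩, rowMapHom_rowProj hΛ g _ b⟩

lemma mem_rowLat_of_rowMapHom_mem (hX : ∀ c : C, (X : K[X]) • c = 0 → c = 0)
    (hf : Function.Injective f)
    (hexact : LinearMap.range f = LinearMap.ker g) {k : ℕ} (hk : k < n) {u : rowSpace hΛ A}
    (hu : rowMapHom hΛ f u ∈ rowLat hΛ B k) : u ∈ rowLat hΛ A k := by
  have hgf : g (f u.1) = 0 := by
    have : f u.1 ∈ LinearMap.ker g := hexact ▸ ⟨u.1, rfl⟩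
    exact this
  obtain ⟨v, hv, hvu⟩ := exists_rowMapHom_eq hΛ hX hexact hk hu (Subtype.ext hgf)
  have : v = u := Subtype.ext (hf (congrArg Subtype.val hvu))
  exact this ▸ hv

/-- Coordinates on the middle term of an exact sequence of rank one lattices. -/
lemma exists_extChain (hn : 3 ≤ n) (hX : ∀ c : C, (X : K[X]) • c = 0 → c = 0)
    (hf : Function.Injective f) (hg : Function.Surjective g)
    (hexact : LinearMap.range f = LinearMap.ker g) {s t s' t' : ℕ}
    {θ : rowSpace hΛ A ≃ₗ[K[X]] K[X]} (hs : 1 ≤ s) (hst : s < t) (ht : t ≤ n)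
    (hθ : ∀ k < n, ∀ u, u ∈ rowLat hΛ A k ↔ X ^ dNat s t k ∣ θ u)
    {θ' : rowSpace hΛ C ≃ₗ[K[X]] K[X]} (hs' : 1 ≤ s') (hst' : s' < t') (ht' : t' ≤ n)
    (hθ' : ∀ k < n, ∀ u, u ∈ rowLat hΛ C k ↔ X ^ dNat s' t' k ∣ θ' u) :
    ∃ τ : (K[X] × K[X]) ≃ₗ[K[X]] rowSpace hΛ B,
      (∀ p, θ' (rowMapHom hΛ g (τ p)) = p.1) ∧
      ExtChain n s t s' t' fun k => (rowLat hΛ B k).comap τ.toLinearMap := by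
  have h0 : 0 < n := by omega
  have hchain := rowChain hΛ (M := B) hn
  set F := rowMapHom hΛ f
  set G := rowMapHom hΛ g
  have hGF : ∀ u, G (F u) = 0 := fun u => by
    have : f u.1 ∈ LinearMap.ker g := hexact ▸ ⟨u.1, rfl⟩
    exact Subtype.ext this
  have hFinj : Function.Injective F := fun u v huv =>
    Subtype.ext (hf (congrArg Subtype.val huv))
  obtain ⟨w, -, hw⟩ := exists_rowMapHom_eq_of_surjective hΛ hg h0
    (u := θ'.symm 1) (by rw [(rowChain hΛ (M := C) hn).zero]; trivial)
  let T : (K[X] × K[X]) →ₗ[K[X]] rowSpace hΛ B :=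
    (LinearMap.toSpanSingleton K[X] _ w).coprod (F ∘ₗ θ.symm.toLinearMap)
  have hT : ∀ p, T p = p.1 • w + F (θ.symm p.2) := fun p => by simp [T]
  have hGT : ∀ p, θ' (G (T p)) = p.1 := fun p => by
    rw [hT, map_add, hGF, map_smul, add_zero, map_smul]
    change p.1 • θ' (rowMapHom hΛ g w) = _
    rw [hw]
    simp
  have hex : ∀ k < n, ∀ u ∈ rowLat hΛ B k, G u = 0 → ∃ v, T (0, v) = u := by
    intro k hk u hu hGu
    obtain ⟨v, -, hv⟩ := exists_rowMapHom_eq hΛ hX hexact hk hu hGu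
    exact ⟨θ v, by simpa [hT] using hv⟩
  have htop : ∀ u, u ∈ rowLat hΛ B 0 := fun u => by rw [hchain.zero]; trivial
  have hbij : Function.Bijective T := by
    refine ⟨(injective_iff_map_eq_zero T).2 fun p hp => ?_, fun u => ?_⟩
    · have h1 : p.1 = 0 := by rw [← hGT p, hp, map_zero, map_zero]
      rw [hT, h1, zero_smul, zero_add, ← map_zero F] at hp
      exact Prod.ext h1 (by simpa using hFinj hp)
    · obtain ⟨v, hv⟩ := hex 0 h0 (u - θ' (G u) • w) (htop _) (by
        rw [map_sub, map_smul, sub_eq_zero]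
        apply θ'.injective
        change _ = θ' (_ • rowMapHom hΛ g w)
        rw [hw]
        simp)
      refine ⟨(θ' (G u), v), ?_⟩
      rw [hT] at hv ⊢
      rw [zero_smul, zero_add] at hv
      simp [hv]
  let τ := LinearEquiv.ofBijective T hbij
  have hτ : ∀ p, τ p = T p := fun p => rfl
  have hL : ∀ k p, p ∈ (rowLat hΛ B k).comap τ.toLinearMap ↔ T p ∈ rowLat hΛ B k :=
    fun k p => Iff.rfl
  refine ⟨τ, fun p => hGT p, ⟨⟨?_, ?_, ?_, ?_, ?_⟩, hs, hst, ht, hs', hst', ht', ?_, ?_, ?_⟩⟩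
  · simp only [hchain.zero, Submodule.comap_top]
  · exact fun k hk => Submodule.comap_mono (hchain.succ_le k hk)
  · intro k hk u hu
    rw [hL] at hu ⊢
    rw [map_smul]
    exact hchain.smul_mem k hk _ hu
  · intro u hu
    obtain ⟨u', hu'⟩ := hchain.exists_smul _ hu
    exact ⟨τ.symm u', τ.injective (by rw [map_smul, τ.apply_symm_apply]; exact hu')⟩
  · intro u
    rw [hL, map_smul]
    exact hchain.sq_smul_mem _
  · intro k hk β
    have hβ : T (0, β) = F (θ.symm β) := by simp [hT]
    rw [hL, hβ]
    have := hθ k hk (θ.symm β)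
    rw [LinearEquiv.apply_symm_apply] at this
    rw [← this]
    exact ⟨mem_rowLat_of_rowMapHom_mem hΛ hX hf hexact hk, rowMapHom_mem hΛ f hk⟩
  · intro k hk α β hαβ
    rw [hL] at hαβ
    have := (hθ' k hk _).1 (rowMapHom_mem hΛ g hk hαβ)
    rwa [hGT] at this
  · intro k hk
    obtain ⟨v, hv, hgv⟩ := exists_rowMapHom_eq_of_surjective hΛ hg hk
      (u := θ'.symm (X ^ dNat s' t' k)) ((hθ' k hk _).2 (by simp))
    obtain ⟨p, rfl⟩ := hbij.2 v
    have h1 : p.1 = X ^ dNat s' t' k := by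
      rw [← hGT p]
      change θ' (rowMapHom hΛ g _) = _
      rw [hgv, LinearEquiv.apply_symm_apply]
    refine ⟨p.2, ?_⟩
    rw [hL, ← h1]
    exact hv

/-- A splitting of the coordinates on the middle term yields a section. -/
lemma exists_section (hXB : ∀ b : B, (X : K[X]) • b = 0 → b = 0)
    (hX : ∀ c : C, (X : K[X]) • c = 0 → c = 0) {s' t' : ℕ}
    {θ' : rowSpace hΛ C ≃ₗ[K[X]] K[X]}
    (hθ' : ∀ k < n, ∀ u, u ∈ rowLat hΛ C k ↔ X ^ dNat s' t' k ∣ θ' u)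
    (w : rowSpace hΛ B) (hw : θ' (rowMapHom hΛ g w) = 1)
    (hwL : ∀ k < n, (X ^ dNat s' t' k : K[X]) • w ∈ rowLat hΛ B k) :
    ∃ sec : C →ₗ[Λ] B, g ∘ₗ sec = LinearMap.id := by
  have hC := isModel_row hΛ hX
  obtain ⟨sec, hsec⟩ := hC.exists_hom hΛ (isModel_row hΛ hXB)
    (fun u hu => Subtype.ext (hXB u.1 (congrArg Subtype.val hu)))
    (θ'.toLinearMap.smulRight w) fun k u hu => by
      obtain ⟨c, hc⟩ := (hθ' k k.2 u).1 hu
      rw [LinearMap.smulRight_apply, LinearEquiv.coe_coe, hc, mul_comm, mul_smul]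
      exact Submodule.smul_mem _ _ (hwL k k.2)
  refine ⟨sec, LinearMap.ext fun c => hC.inj _ _ fun k => ?_⟩
  rw [LinearMap.comp_apply, ← rowMapHom_rowProj, hsec, LinearMap.smulRight_apply, map_smul]
  apply θ'.injective
  simp [hw]

end Exact

/-- A lattice with a rank one coordinate is isomorphic to `(i, j)`. -/
lemma nonempty_equiv_of_coord (hX : ∀ m : M, (X : K[X]) • m = 0 → m = 0) {i j : ℕ}
    {θ : rowSpace hΛ M ≃ₗ[K[X]] K[X]}
    (hθ : ∀ k < n, ∀ u, u ∈ rowLat hΛ M k ↔ X ^ dNat i j k ∣ θ u)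
    (E : Submodule Λ (Fin n → RatFunc K))
    (hE : (E : Set (Fin n → RatFunc K)) = ijSet K n i j) : Nonempty (M ≃ₗ[Λ] E) := by
  obtain ⟨π, hπ⟩ := exists_isModel_of_eq_ijSet E hE
  exact (isModel_row hΛ hX).nonempty_equiv hΛ hπ
    (fun w hw => (mul_eq_zero.1 hw).resolve_left X_ne_zero) θ
    fun k hk u => mem_rankOne.trans (hθ k hk u).symm

lemma nonempty_equiv_prod_of_coord (hX : ∀ m : M, (X : K[X]) • m = 0 → m = 0) {i j i' j' : ℕ}
    {θ : (K[X] × K[X]) ≃ₗ[K[X]] rowSpace hΛ M}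
    (hθ : ∀ k < n, ∀ p q, θ (p, q) ∈ rowLat hΛ M k ↔ X ^ dNat i j k ∣ p ∧ X ^ dNat i' j' k ∣ q)
    (E E' : Submodule Λ (Fin n → RatFunc K))
    (hE : (E : Set (Fin n → RatFunc K)) = ijSet K n i j)
    (hE' : (E' : Set (Fin n → RatFunc K)) = ijSet K n i' j') :
    Nonempty (M ≃ₗ[Λ] (E × E')) := by
  obtain ⟨π, hπ⟩ := exists_isModel_of_eq_ijSet E hE
  obtain ⟨π', hπ'⟩ := exists_isModel_of_eq_ijSet E' hE'
  have hK : ∀ w : K[X], (X : K[X]) • w = 0 → w = 0 :=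
    fun w hw => (mul_eq_zero.1 hw).resolve_left X_ne_zero
  refine (isModel_row hΛ hX).nonempty_equiv hΛ (hπ.prod hπ')
    (fun w hw => Prod.ext (hK _ (congrArg Prod.fst hw)) (hK _ (congrArg Prod.snd hw))) θ.symm
    fun k hk u => ?_
  rw [Submodule.mem_prod, mem_rankOne, mem_rankOne, ← hθ k hk, Prod.mk.eta, θ.apply_symm_apply]

end Rows

end Models

universe u

/-- Let `0 → A → B → C → 0` be a non-split short exact sequence of `Λ`-modules with `A` and
`C` indecomposable Cohen–Macaulay. Then either `A ≅ (s,t)`, `B ≅ (s,t') ⊕ (s',t)`,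
`C ≅ (s',t')` for some `s < s' < t < t'`, or `A ≅ (s,t)`, `B ≅ (s',s) ⊕ (t',t)`,
`C ≅ (s',t')` for some `s' < s < t' < t`. -/
theorem statement8 (K : Type) [Field K] (n : ℕ) (hn : 3 ≤ n)
    (Λ : Subalgebra (Polynomial K) (Matrix (Fin n) (Fin n) (RatFunc K)))
    (hΛ : (Λ : Set (Matrix (Fin n) (Fin n) (RatFunc K))) = lambdaCarrier K n)
    (E : ℕ → ℕ → Submodule ↥Λ (Fin n → RatFunc K))
    (hE : ∀ i j : ℕ, 1 ≤ i → i < j → j ≤ n →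
      (E i j : Set (Fin n → RatFunc K)) = ijSet K n i j)
    -- the three terms of the sequence
    (A : Type u) [AddCommGroup A] [Module ↥Λ A]
    [Module (Polynomial K) A] [IsScalarTower (Polynomial K) ↥Λ A]
    (B : Type u) [AddCommGroup B] [Module ↥Λ B]
    (C : Type u) [AddCommGroup C] [Module ↥Λ C]
    [Module (Polynomial K) C] [IsScalarTower (Polynomial K) ↥Λ C]
    -- `A` and `C` are Cohen–Macaulay and indecomposable
    (hAfin : Module.Finite (Polynomial K) A) (hAtf : NoZeroSMulDivisors (Polynomial K) A)
    (hAind : Nontrivial A ∧ ¬ ∃ (X Y : Submodule ↥Λ A), IsCompl X Y ∧ X ≠ ⊥ ∧ Y ≠ ⊥)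
    (hCfin : Module.Finite (Polynomial K) C) (hCtf : NoZeroSMulDivisors (Polynomial K) C)
    (hCind : Nontrivial C ∧ ¬ ∃ (X Y : Submodule ↥Λ C), IsCompl X Y ∧ X ≠ ⊥ ∧ Y ≠ ⊥)
    -- a non-split short exact sequence `0 → A → B → C → 0`
    (f : A →ₗ[↥Λ] B) (g : B →ₗ[↥Λ] C)
    (hf : Function.Injective f) (hg : Function.Surjective g)
    (hexact : LinearMap.range f = LinearMap.ker g)
    (hnonsplit : ¬ ∃ sec : C →ₗ[↥Λ] B, g ∘ₗ sec = LinearMap.id) :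
    (∃ s s' t t' : ℕ, 1 ≤ s ∧ s < s' ∧ s' < t ∧ t < t' ∧ t' ≤ n ∧
      Nonempty (A ≃ₗ[↥Λ] ↥(E s t)) ∧
      Nonempty (B ≃ₗ[↥Λ] (↥(E s t') × ↥(E s' t))) ∧
      Nonempty (C ≃ₗ[↥Λ] ↥(E s' t'))) ∨
    (∃ s' s t' t : ℕ, 1 ≤ s' ∧ s' < s ∧ s < t' ∧ t' < t ∧ t ≤ n ∧
      Nonempty (A ≃ₗ[↥Λ] ↥(E s t)) ∧
      Nonempty (B ≃ₗ[↥Λ] (↥(E s' s) × ↥(E t' t))) ∧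
      Nonempty (C ≃ₗ[↥Λ] ↥(E s' t'))) := by
  have : NeZero n := ⟨by omega⟩
  let : Module K[X] B := Module.compHom B (algebraMap K[X] Λ)
  have : IsScalarTower K[X] Λ B := ⟨fun p l b => by
    rw [Algebra.smul_def, mul_smul]
    rfl⟩
  have hXA : ∀ a : A, (X : K[X]) • a = 0 → a = 0 := fun a ha =>
    (smul_eq_zero.1 ha).resolve_left X_ne_zero
  have hXC : ∀ c : C, (X : K[X]) • c = 0 → c = 0 := fun c hc =>
    (smul_eq_zero.1 hc).resolve_left X_ne_zero
  have hXB : ∀ b : B, (X : K[X]) • b = 0 → b = 0 := fun b hb => by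
    obtain ⟨a, rfl⟩ : b ∈ LinearMap.range f := by
      rw [hexact]
      exact hXC _ (by rw [← map_poly_smul, hb, map_zero])
    rw [← map_poly_smul, ← map_zero f] at hb
    rw [hXA a (hf hb), map_zero]
  obtain ⟨s, t, θ, hs, hst, ht, hθ⟩ := exists_coord hΛ hn hAind
  obtain ⟨s', t', θ', hs', hst', ht', hθ'⟩ := exists_coord hΛ hn hCind
  obtain ⟨τ, hτ, hL⟩ := exists_extChain hΛ hn hXC hf hg hexact hs hst ht hθ hs' hst' ht' hθ'
  have hA := nonempty_equiv_of_coord hΛ hXA hθ (E s t) (hE s t hs hst ht)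
  have hC := nonempty_equiv_of_coord hΛ hXC hθ' (E s' t') (hE s' t' hs' hst' ht')
  rcases hL.split_or_crossing with ⟨c, hc⟩ | ⟨h1, h2, h3, σ, hσ⟩ | ⟨h1, h2, h3, σ, hσ⟩
  · refine absurd (exists_section hΛ hXB hXC hθ' (τ (1, c)) (hτ _) fun k hk => ?_) hnonsplit
    rw [← map_smul]
    exact hc k hk
  · refine Or.inl ⟨s, s', t, t', hs, h1, h2, h3, ht', hA, ?_, hC⟩
    refine nonempty_equiv_prod_of_coord hΛ hXB
      (θ := (LinearEquiv.prodComm K[X] K[X] K[X]).trans (σ.trans τ)) (fun k hk p q => ?_) _ _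
      (hE s t' hs (by omega) ht') (hE s' t hs' h2 ht)
    exact (hσ k hk q p).trans and_comm
  · refine Or.inr ⟨s', s, t', t, hs', h1, h2, h3, ht, hA, ?_, hC⟩
    exact nonempty_equiv_prod_of_coord hΛ hXB (θ := σ.trans τ) hσ _ _
      (hE s' s hs' h1 (by omega)) (hE t' t (by omega) h3 ht)
end
end
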